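/- Fix τ ∈ (0,1) and ε, D > 0. Then there exists N₀ such that for all N ≥ N₀ and all integers d with N^τ ≤ d ≤ N/2 and dN even, the uniform random d-regular graph satisfies: with probability at least 1 − N^{−D}, every eigenvector u ∈ ℝ^N of 𝒜 with ‖u‖₂ = 1 satisfies ‖u‖_∞ ≤ N^{ε − 1/2}. -/

import Mathlib

open MeasureTheory Filter Matrix
open scoped ENNReal NNReal

noncomputable section

/-- `A` is the adjacency matrix of a `d`-regular graph on `N` vertices:
a symmetric `{0,1}`-matrix with zero diagonal and all row sums equal to `d`. -/
def IsAdjMat (N d : ℕ) (A : Matrix (Fin N) (Fin N) ℝ) : Prop :=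
  A.IsSymm ∧ (∀ i, A i i = 0) ∧ (∀ i j, A i j = 0 ∨ A i j = 1) ∧ ∀ i, ∑ j, A i j = d

/-- probability of an event under the uniform measure on `d`-regular graphs on `N` vertices. -/
def PrReg (N d : ℕ) (E : Matrix (Fin N) (Fin N) ℝ → Prop) : ℝ :=
  (Nat.card {A : Matrix (Fin N) (Fin N) ℝ // IsAdjMat N d A ∧ E A} : ℝ) /
    (Nat.card {A : Matrix (Fin N) (Fin N) ℝ // IsAdjMat N d A} : ℝ)

/-- expectation of `F` under the uniform measure on `d`-regular graphs on `N` vertices. -/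
def Ereg (N d : ℕ) (F : Matrix (Fin N) (Fin N) ℝ → ℝ) : ℝ :=
  (∑ᶠ A : {A : Matrix (Fin N) (Fin N) ℝ // IsAdjMat N d A}, F A.1) /
    (Nat.card {A : Matrix (Fin N) (Fin N) ℝ // IsAdjMat N d A} : ℝ)

/-- the `k`-th largest eigenvalue (`1`-based indexing) of a symmetric matrix. -/
def eigval {N : ℕ} (A : Matrix (Fin N) (Fin N) ℝ) (k : ℕ) : ℝ :=
  if hA : A.IsHermitian then
    if h : k - 1 < N then
      hA.eigenvalues (Tuple.sort hA.eigenvalues (Fin.rev ⟨k - 1, h⟩))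
    else 0
  else 0

/-- `q = √(d(N-d)/N)`. -/
def qval (N d : ℕ) : ℝ := Real.sqrt ((d : ℝ) * ((N : ℝ) - (d : ℝ)) / (N : ℝ))

/-- the projection `P⊥ = I - e eᵀ` (complex version). -/
def Pperp (N : ℕ) : Matrix (Fin N) (Fin N) ℂ := 1 - Matrix.of fun _ _ => (N : ℂ)⁻¹

/-- the projection `P⊥ = I - e eᵀ` (real version). -/
def PperpR (N : ℕ) : Matrix (Fin N) (Fin N) ℝ := 1 - Matrix.of fun _ _ => (N : ℝ)⁻¹

/-- the Green function `G(z) = P⊥ (q⁻¹𝒜 - z)⁻¹ P⊥`. -/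
def greenM (N d : ℕ) (A : Matrix (Fin N) (Fin N) ℝ) (z : ℂ) : Matrix (Fin N) (Fin N) ℂ :=
  Pperp N * (((qval N d : ℝ) : ℂ)⁻¹ • A.map Complex.ofReal - z • 1)⁻¹ * Pperp N

/-- the normalized trace `Ḡ(z) = N⁻¹ Tr G(z)`. -/
def gbar (N d : ℕ) (A : Matrix (Fin N) (Fin N) ℝ) (z : ℂ) : ℂ :=
  (N : ℂ)⁻¹ * (greenM N d A z).trace

/-- the Stieltjes transform of the semicircle density `ϱ(x) = (2π)⁻¹ √((4-x²)₊)`. -/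
def mSC (z : ℂ) : ℂ :=
  ∫ x in (-2 : ℝ)..2, ((Real.sqrt (4 - x ^ 2) / (2 * Real.pi) : ℝ) : ℂ) / ((x : ℂ) - z)

/-- `(Δ_{ij})_{xy} = δ_{ix}δ_{jy} + δ_{iy}δ_{jx}`. -/
def Dmat (N : ℕ) (i j : Fin N) : Matrix (Fin N) (Fin N) ℝ :=
  Matrix.of fun x y =>
    (if i = x ∧ j = y then (1 : ℝ) else 0) + (if i = y ∧ j = x then (1 : ℝ) else 0)

/-- `ξ_{ij}^{kl} = Δ_{ij} + Δ_{kl} - Δ_{ik} - Δ_{jl}`. -/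
def xiMat (N : ℕ) (i j k l : Fin N) : Matrix (Fin N) (Fin N) ℝ :=
  Dmat N i j + Dmat N k l - Dmat N i k - Dmat N j l

/-- `χ_{ij}^{kl}(𝒜) = 𝒜_{ij}(1-𝒜_{ik})𝒜_{kl}(1-𝒜_{jl})`. -/
def chi (N : ℕ) (A : Matrix (Fin N) (Fin N) ℝ) (i j k l : Fin N) : ℝ :=
  A i j * (1 - A i k) * A k l * (1 - A j l)

/-- `𝓜_{ij}(F(𝒜)) = max_{k,l} |F(𝒜 + ξ_{ij}^{kl})|`. -/
def Mmax (N : ℕ) (i j : Fin N) (F : Matrix (Fin N) (Fin N) ℝ → ℝ)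
    (A : Matrix (Fin N) (Fin N) ℝ) : ℝ :=
  ⨆ p : Fin N × Fin N, |F (A + xiMat N i j p.1 p.2)|

instance matMS (N : ℕ) : MeasurableSpace (Matrix (Fin N) (Fin N) ℝ) :=
  show MeasurableSpace (Fin N → Fin N → ℝ) from inferInstance

/-- the GOE: push-forward of independent centered Gaussians with variance `(1+δ_{ij})/N`
on the upper triangle under the symmetrization map. -/
def goeMeasure (N : ℕ) : Measure (Matrix (Fin N) (Fin N) ℝ) :=
  Measure.map (fun f => Matrix.of fun i j => if i ≤ j then f (i, j) else f (j, i))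
    (Measure.pi fun p : Fin N × Fin N =>
      ProbabilityTheory.gaussianReal 0 (if p.1 = p.2 then 2 / N else 1 / N))

/-- the uniform probability measure on `d`-regular graphs on `N` vertices, as a measure. -/
def uniformReg (N d : ℕ) : Measure (Matrix (Fin N) (Fin N) ℝ) :=
  (Nat.card {A : Matrix (Fin N) (Fin N) ℝ // IsAdjMat N d A} : ℝ≥0∞)⁻¹ •
    Measure.sum fun A : {A : Matrix (Fin N) (Fin N) ℝ // IsAdjMat N d A} =>
      Measure.dirac A.1

/-- the matrix flow `A(t) = e^{-t/2} q⁻¹𝒜 + √(1-e^{-t}) W`, where `W = P⊥ H P⊥`. -/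
def flowMat (N d : ℕ) (A H : Matrix (Fin N) (Fin N) ℝ) (t : ℝ) : Matrix (Fin N) (Fin N) ℝ :=
  Real.exp (-t / 2) • ((qval N d)⁻¹ • A) +
    Real.sqrt (1 - Real.exp (-t)) • (PperpR N * H * PperpR N)

/-- the Green function of the matrix flow, `G(t;z) = P⊥ (A(t) - z)⁻¹ P⊥`. -/
def greenFlow (N d : ℕ) (A H : Matrix (Fin N) (Fin N) ℝ) (t : ℝ) (z : ℂ) :
    Matrix (Fin N) (Fin N) ℂ :=
  Pperp N * ((flowMat N d A H t).map Complex.ofReal - z • 1)⁻¹ * Pperp N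

/-- the normalized trace of the Green function of the flow. -/
def gbarFlow (N d : ℕ) (A H : Matrix (Fin N) (Fin N) ℝ) (t : ℝ) (z : ℂ) : ℂ :=
  (N : ℂ)⁻¹ * (greenFlow N d A H t z).trace

open Classical in
theorem adj_finite (N d : ℕ) : {A : Matrix (Fin N) (Fin N) ℝ | IsAdjMat N d A}.Finite := by
  have h : {A : Fin N → Fin N → ℝ | ∀ i, A i ∈ {r : Fin N → ℝ | ∀ j, r j ∈ ({0, 1} : Set ℝ)}}.Finite :=
    Set.Finite.pi' fun i => Set.Finite.pi' fun j => by simp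
  refine h.subset ?_
  intro A hA i j
  have := hA.2.2.1 i j
  simpa using this

def Gr (N d : ℕ) : Finset (Matrix (Fin N) (Fin N) ℝ) := (adj_finite N d).toFinset

theorem mem_Gr {N d : ℕ} {A : Matrix (Fin N) (Fin N) ℝ} : A ∈ Gr N d ↔ IsAdjMat N d A := by
  simp [Gr]

section sw
variable {N d : ℕ}

def sv (i l x : Fin N) : ℝ := (if x = i then 1 else 0) - (if x = l then 1 else 0)

def Xm (i l j k : Fin N) : Matrix (Fin N) (Fin N) ℝ :=
  Matrix.of fun x y => sv i l x * sv k j y + sv k j x * sv i l y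

def swi (A : Matrix (Fin N) (Fin N) ℝ) (i l j k : Fin N) : Matrix (Fin N) (Fin N) ℝ :=
  A + Xm i l j k

def aw (A : Matrix (Fin N) (Fin N) ℝ) (i l j : Fin N) : ℝ :=
  A i j * (1 - A l j) * (if j = l then 0 else 1)

def nw (A : Matrix (Fin N) (Fin N) ℝ) (i l : Fin N) : ℝ := ∑ j, aw A i l j

def ww (A : Matrix (Fin N) (Fin N) ℝ) (i l j k : Fin N) : ℝ :=
  aw A i l j * aw A l i k / nw A i l

theorem IsAdjMat.symm_apply {A : Matrix (Fin N) (Fin N) ℝ} (hA : IsAdjMat N d A) (i j : Fin N) :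
    A i j = A j i := hA.1.apply j i

theorem IsAdjMat.nn {A : Matrix (Fin N) (Fin N) ℝ} (hA : IsAdjMat N d A) (i j : Fin N) :
    0 ≤ A i j := by rcases hA.2.2.1 i j with h | h <;> simp [h]

theorem IsAdjMat.le1 {A : Matrix (Fin N) (Fin N) ℝ} (hA : IsAdjMat N d A) (i j : Fin N) :
    A i j ≤ 1 := by rcases hA.2.2.1 i j with h | h <;> simp [h]

theorem IsAdjMat.colsum {A : Matrix (Fin N) (Fin N) ℝ} (hA : IsAdjMat N d A) (j : Fin N) :
    ∑ i, A i j = d := by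
  rw [← hA.2.2.2 j]; exact Finset.sum_congr rfl fun i _ => hA.symm_apply i j

variable {A : Matrix (Fin N) (Fin N) ℝ} (hA : IsAdjMat N d A)
include hA

theorem aw_eq (i l j : Fin N) : aw A i l j = A i j - (if j = l then A i l else 0) - A i j * A l j := by
  unfold aw
  split_ifs with h
  · subst h; simp [hA.2.1]
  · ring

theorem aw_01 (i l j : Fin N) : aw A i l j = 0 ∨ aw A i l j = 1 := by
  unfold aw
  rcases hA.2.2.1 i j with h | h <;> rcases hA.2.2.1 l j with h' | h' <;> split_ifs <;> simp [h, h']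

theorem aw_nn (i l j : Fin N) : 0 ≤ aw A i l j := by
  rcases aw_01 hA i l j with h | h <;> simp [h]

theorem aw_le (i l j : Fin N) : aw A i l j ≤ A i j := by
  unfold aw
  rcases hA.2.2.1 i j with h | h <;> rcases hA.2.2.1 l j with h' | h' <;> split_ifs <;> simp [h, h']

theorem nw_eq (i l : Fin N) : nw A i l = d - A i l - ∑ j, A i j * A l j := by
  unfold nw
  simp only [aw_eq hA, Finset.sum_sub_distrib, hA.2.2.2]
  simp

theorem nw_symm (i l : Fin N) : nw A l i = nw A i l := by
  rw [nw_eq hA, nw_eq hA, hA.symm_apply l i]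
  simp only [mul_comm]

theorem nw_nn (i l : Fin N) : 0 ≤ nw A i l := Finset.sum_nonneg fun j _ => aw_nn hA i l j

theorem ww_nn (i l j k : Fin N) : 0 ≤ ww A i l j k :=
  div_nonneg (mul_nonneg (aw_nn hA _ _ _) (aw_nn hA _ _ _)) (nw_nn hA _ _)

theorem aw_zero_of_nw {i l : Fin N} (h : nw A i l = 0) (j : Fin N) : aw A i l j = 0 :=
  (Finset.sum_eq_zero_iff_of_nonneg (fun j _ => aw_nn hA i l j)).1 h j (Finset.mem_univ j)

theorem ww_sum_k (i l j : Fin N) : ∑ k, ww A i l j k = aw A i l j := by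
  unfold ww
  rw [← Finset.sum_div, ← Finset.mul_sum]
  change aw A i l j * nw A l i / nw A i l = _
  rw [nw_symm hA]
  by_cases h : nw A i l = 0
  · simp [aw_zero_of_nw hA h]
  · field_simp

theorem ww_sum_j (i l k : Fin N) : ∑ j, ww A i l j k = aw A l i k := by
  unfold ww
  rw [← Finset.sum_div, ← Finset.sum_mul]
  change nw A i l * aw A l i k / nw A i l = _
  by_cases h : nw A i l = 0
  · have h2 : nw A l i = 0 := by rw [nw_symm hA, h]
    simp [aw_zero_of_nw hA h2]
  · field_simp

theorem nw_le (i l : Fin N) : nw A i l ≤ d := by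
  rw [← hA.2.2.2 i]; exact Finset.sum_le_sum fun j _ => aw_le hA i l j

theorem ww_ne {i l j k : Fin N} (h : ww A i l j k ≠ 0) :
    A i j = 1 ∧ A l j = 0 ∧ A l k = 1 ∧ A i k = 0 ∧ i ≠ l ∧ j ≠ k ∧ i ≠ j ∧ i ≠ k ∧ l ≠ j ∧ l ≠ k := by
  have h1 : aw A i l j ≠ 0 := fun h' => h (by simp [ww, h'])
  have h2 : aw A l i k ≠ 0 := fun h' => h (by simp [ww, h'])
  have e1 : A i j = 1 ∧ A l j = 0 ∧ j ≠ l := by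
    unfold aw at h1
    rcases hA.2.2.1 i j with h | h <;> rcases hA.2.2.1 l j with h' | h' <;> by_cases h3 : j = l <;>
      simp_all
  have e2 : A l k = 1 ∧ A i k = 0 ∧ k ≠ i := by
    unfold aw at h2
    rcases hA.2.2.1 l k with h | h <;> rcases hA.2.2.1 i k with h' | h' <;> by_cases h3 : k = i <;>
      simp_all
  obtain ⟨a1, a2, a3⟩ := e1
  obtain ⟨b1, b2, b3⟩ := e2
  refine ⟨a1, a2, b1, b2, ?_, ?_, ?_, b3.symm, a3.symm, ?_⟩
  · rintro rfl; rw [a1] at a2; norm_num at a2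
  · rintro rfl; rw [a1] at b2; norm_num at b2
  · rintro rfl; rw [hA.2.1] at a1; norm_num at a1
  · rintro rfl; rw [hA.2.1] at b1; norm_num at b1

omit hA in
theorem sum_sv (i l : Fin N) : ∑ x, sv i l x = 0 := by simp [sv]

theorem swi_adj {i l j k : Fin N} (h : ww A i l j k ≠ 0) : IsAdjMat N d (swi A i l j k) := by
  obtain ⟨a1, a2, b1, b2, il, jk, ij, ik, lj, lk⟩ := ww_ne hA h
  have a1' := hA.symm_apply j i
  have a2' := hA.symm_apply j l
  have b1' := hA.symm_apply k l
  have b2' := hA.symm_apply k i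
  rw [a1] at a1'; rw [a2] at a2'; rw [b1] at b1'; rw [b2] at b2'
  refine ⟨?_, ?_, ?_, ?_⟩
  · ext x y
    simp only [swi, Xm, transpose_apply, Matrix.add_apply, Matrix.of_apply, hA.symm_apply x y]
    ring
  · intro x
    simp only [swi, Xm, Matrix.add_apply, Matrix.of_apply, hA.2.1, sv]
    split_ifs <;> simp_all
  · intro x y
    have hxy := hA.2.2.1 x y
    simp only [swi, Xm, Matrix.add_apply, Matrix.of_apply, sv]
    by_cases x1 : x = i
    · subst x1
      by_cases y1 : y = j
      · subst y1; simp_all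
      · by_cases y2 : y = k
        · subst y2; simp_all
        · simp_all
    · by_cases x2 : x = l
      · subst x2
        by_cases y1 : y = j
        · subst y1; simp_all
        · by_cases y2 : y = k
          · subst y2; simp_all
          · simp_all
      · by_cases x3 : x = j
        · subst x3
          by_cases y1 : y = i
          · subst y1; simp_all
          · by_cases y2 : y = l
            · subst y2; simp_all
            · simp_all
        · by_cases x4 : x = k
          · subst x4
            by_cases y1 : y = i
            · subst y1; simp_all
            · by_cases y2 : y = l
              · subst y2; simp_all
              · simp_all
          · simp_all
  · intro x
    simp only [swi, Xm, Matrix.add_apply, Matrix.of_apply, Finset.sum_add_distrib, hA.2.2.2,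
      ← Finset.mul_sum, sum_sv]
    simp

omit hA in
theorem swi_swi (A : Matrix (Fin N) (Fin N) ℝ) (i l j k : Fin N) :
    swi (swi A i l j k) i l k j = A := by
  ext x y
  simp only [swi, Xm, Matrix.add_apply, Matrix.of_apply, sv]
  ring

theorem ww_swi {i l j k : Fin N} (h : ww A i l j k ≠ 0) :
    ww (swi A i l j k) i l k j = ww A i l j k := by
  have hB := swi_adj hA h
  obtain ⟨a1, a2, b1, b2, il, jk, ij, ik, lj, lk⟩ := ww_ne hA h
  have ri : ∀ y, swi A i l j k i y = A i y + sv k j y := by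
    intro y; simp [swi, Xm, sv, il, ik, ij]
  have rl : ∀ y, swi A i l j k l y = A l y - sv k j y := by
    intro y; simp [swi, Xm, sv, il.symm, lk, lj]; ring
  have hn : nw (swi A i l j k) i l = nw A i l := by
    rw [nw_eq hA, nw_eq hB]
    congr 1
    · rw [ri]; simp [sv, lk, lj]
    · refine Finset.sum_congr rfl fun y _ => ?_
      rw [ri, rl]
      by_cases y1 : y = k
      · subst y1; simp [sv, jk.symm, b1, b2]
      · by_cases y2 : y = j
        · subst y2; simp [sv, jk, a1, a2]
        · simp [sv, y1, y2]
  have e1 : aw (swi A i l j k) i l k = 1 := by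
    unfold aw; rw [ri, rl]; simp [sv, jk.symm, b1, b2, lk.symm]
  have e2 : aw (swi A i l j k) l i j = 1 := by
    unfold aw; rw [ri, rl]; simp [sv, jk, a1, a2, ij.symm]
  have e3 : aw A i l j = 1 := by unfold aw; simp [a1, a2, lj.symm]
  have e4 : aw A l i k = 1 := by unfold aw; simp [b1, b2, ik.symm]
  unfold ww; rw [hn, e1, e2, e3, e4]

end sw

/-- weighted sum over switches -/
def WS {N : ℕ} (A : Matrix (Fin N) (Fin N) ℝ) (i : Fin N) (Ψ : Fin N → Fin N → Fin N → ℝ) : ℝ :=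
  ∑ l, ∑ j, ∑ k, ww A i l j k * Ψ l j k

theorem WS_invol {N d : ℕ} (i : Fin N)
    (Ψ : Matrix (Fin N) (Fin N) ℝ → Matrix (Fin N) (Fin N) ℝ → Fin N → Fin N → ℝ) :
    ∑ A ∈ Gr N d, WS A i (fun l j k => Ψ A (swi A i l j k) j k) =
    ∑ A ∈ Gr N d, WS A i (fun l j k => Ψ (swi A i l j k) A k j) := by
  classical
  unfold WS
  have key : ∀ l, ∑ A ∈ Gr N d, ∑ j, ∑ k, ww A i l j k * Ψ A (swi A i l j k) j k =
      ∑ A ∈ Gr N d, ∑ j, ∑ k, ww A i l j k * Ψ (swi A i l j k) A k j := by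
    intro l
    have e : ∀ f : Matrix (Fin N) (Fin N) ℝ → Fin N → Fin N → ℝ,
        ∑ A ∈ Gr N d, ∑ j, ∑ k, ww A i l j k * f A j k =
        ∑ p ∈ (Gr N d ×ˢ (Finset.univ : Finset (Fin N × Fin N))).filter
          (fun p => ww p.1 i l p.2.1 p.2.2 ≠ 0), ww p.1 i l p.2.1 p.2.2 * f p.1 p.2.1 p.2.2 := by
      intro f
      rw [Finset.sum_filter_of_ne (fun p _ h => left_ne_zero_of_mul h), Finset.sum_product]
      refine Finset.sum_congr rfl fun A _ => ?_
      rw [Fintype.sum_prod_type]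
    rw [e (fun A j k => Ψ A (swi A i l j k) j k), e (fun A j k => Ψ (swi A i l j k) A k j)]
    refine Finset.sum_nbij' (fun p => (swi p.1 i l p.2.1 p.2.2, p.2.2, p.2.1))
      (fun p => (swi p.1 i l p.2.1 p.2.2, p.2.2, p.2.1)) ?_ ?_ ?_ ?_ ?_
    · rintro ⟨A, j, k⟩ h
      simp only [Finset.mem_filter, Finset.mem_product, Finset.mem_univ, and_true, mem_Gr] at h ⊢
      exact ⟨swi_adj h.1 h.2, by rw [ww_swi h.1 h.2]; exact h.2⟩
    · rintro ⟨A, j, k⟩ h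
      simp only [Finset.mem_filter, Finset.mem_product, Finset.mem_univ, and_true, mem_Gr] at h ⊢
      exact ⟨swi_adj h.1 h.2, by rw [ww_swi h.1 h.2]; exact h.2⟩
    · rintro ⟨A, j, k⟩ h
      simp [swi_swi]
    · rintro ⟨A, j, k⟩ h
      simp [swi_swi]
    · rintro ⟨A, j, k⟩ h
      simp only [Finset.mem_filter, Finset.mem_product, Finset.mem_univ, and_true, mem_Gr] at h ⊢
      rw [ww_swi h.1 h.2, swi_swi]
  rw [Finset.sum_comm, Finset.sum_comm (s := Gr N d)]
  exact Finset.sum_congr rfl fun l _ => key l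

def Sop {N : ℕ} (φ : Matrix (Fin N) (Fin N) ℝ → Fin N → ℝ) (i : Fin N)
    (A : Matrix (Fin N) (Fin N) ℝ) : ℝ :=
  WS A i (fun l j k => φ A j - φ (swi A i l j k) k)

def vop {N : ℕ} (φ : Matrix (Fin N) (Fin N) ℝ → Fin N → ℝ) (i : Fin N)
    (g : Matrix (Fin N) (Fin N) ℝ → ℝ) (A : Matrix (Fin N) (Fin N) ℝ) : ℝ :=
  WS A i (fun l j k => |φ A j - φ (swi A i l j k) k| * |g A - g (swi A i l j k)|)

theorem WS_mono {N d : ℕ} {A : Matrix (Fin N) (Fin N) ℝ} (hA : IsAdjMat N d A) (i : Fin N)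
    {Ψ Φ : Fin N → Fin N → Fin N → ℝ}
    (h : ∀ l j k, ww A i l j k ≠ 0 → Ψ l j k ≤ Φ l j k) : WS A i Ψ ≤ WS A i Φ := by
  unfold WS
  refine Finset.sum_le_sum fun l _ => Finset.sum_le_sum fun j _ => Finset.sum_le_sum fun k _ => ?_
  by_cases h0 : ww A i l j k = 0
  · simp [h0]
  · exact mul_le_mul_of_nonneg_left (h l j k h0) (ww_nn hA _ _ _ _)

theorem WS_nn {N d : ℕ} {A : Matrix (Fin N) (Fin N) ℝ} (hA : IsAdjMat N d A) (i : Fin N)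
    {Ψ : Fin N → Fin N → Fin N → ℝ} (h : ∀ l j k, 0 ≤ Ψ l j k) : 0 ≤ WS A i Ψ := by
  unfold WS
  exact Finset.sum_nonneg fun l _ => Finset.sum_nonneg fun j _ => Finset.sum_nonneg fun k _ =>
    mul_nonneg (ww_nn hA _ _ _ _) (h _ _ _)

theorem WS_abs {N d : ℕ} {A : Matrix (Fin N) (Fin N) ℝ} (hA : IsAdjMat N d A) (i : Fin N)
    (Ψ : Fin N → Fin N → Fin N → ℝ) : |WS A i Ψ| ≤ WS A i (fun l j k => |Ψ l j k|) := by
  unfold WS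
  refine (Finset.abs_sum_le_sum_abs _ _).trans (Finset.sum_le_sum fun l _ => ?_)
  refine (Finset.abs_sum_le_sum_abs _ _).trans (Finset.sum_le_sum fun j _ => ?_)
  refine (Finset.abs_sum_le_sum_abs _ _).trans (Finset.sum_le_sum fun k _ => ?_)
  rw [abs_mul, abs_of_nonneg (ww_nn hA _ _ _ _)]

theorem WS_add {N : ℕ} (A : Matrix (Fin N) (Fin N) ℝ) (i : Fin N)
    (Ψ Φ : Fin N → Fin N → Fin N → ℝ) :
    WS A i (fun l j k => Ψ l j k + Φ l j k) = WS A i Ψ + WS A i Φ := by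
  simp only [WS, mul_add, Finset.sum_add_distrib]

theorem WS_sub {N : ℕ} (A : Matrix (Fin N) (Fin N) ℝ) (i : Fin N)
    (Ψ Φ : Fin N → Fin N → Fin N → ℝ) :
    WS A i (fun l j k => Ψ l j k - Φ l j k) = WS A i Ψ - WS A i Φ := by
  simp only [WS, mul_sub, Finset.sum_sub_distrib]

theorem WS_smul {N : ℕ} (A : Matrix (Fin N) (Fin N) ℝ) (i : Fin N) (c : ℝ)
    (Ψ : Fin N → Fin N → Fin N → ℝ) :
    WS A i (fun l j k => c * Ψ l j k) = c * WS A i Ψ := by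
  simp only [WS, Finset.mul_sum]
  refine Finset.sum_congr rfl fun l _ => Finset.sum_congr rfl fun j _ =>
    Finset.sum_congr rfl fun k _ => by ring

theorem WS_j {N d : ℕ} {A : Matrix (Fin N) (Fin N) ℝ} (hA : IsAdjMat N d A) (i : Fin N)
    (f : Fin N → Fin N → ℝ) : WS A i (fun l j _ => f l j) = ∑ l, ∑ j, aw A i l j * f l j := by
  unfold WS
  refine Finset.sum_congr rfl fun l _ => Finset.sum_congr rfl fun j _ => ?_
  rw [← Finset.sum_mul, ww_sum_k hA]

theorem WS_k {N d : ℕ} {A : Matrix (Fin N) (Fin N) ℝ} (hA : IsAdjMat N d A) (i : Fin N)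
    (f : Fin N → Fin N → ℝ) : WS A i (fun l _ k => f l k) = ∑ l, ∑ k, aw A l i k * f l k := by
  unfold WS
  refine Finset.sum_congr rfl fun l _ => ?_
  rw [Finset.sum_comm]
  refine Finset.sum_congr rfl fun j _ => ?_
  rw [← Finset.sum_mul, ww_sum_j hA]

theorem WS_const {N d : ℕ} {A : Matrix (Fin N) (Fin N) ℝ} (hA : IsAdjMat N d A) (i : Fin N)
    {c : ℝ} (hc : 0 ≤ c) : WS A i (fun _ _ _ => c) ≤ N * d * c := by
  rw [WS_j hA i (fun _ _ => c)]
  calc ∑ l, ∑ j, aw A i l j * c = ∑ l, nw A i l * c := by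
        refine Finset.sum_congr rfl fun l _ => by rw [← Finset.sum_mul]; rfl
    _ ≤ ∑ l : Fin N, (d : ℝ) * c :=
        Finset.sum_le_sum fun l _ => mul_le_mul_of_nonneg_right (nw_le hA i l) hc
    _ = _ := by simp; ring

theorem pow_diff_bound (m : ℕ) (x y : ℝ) :
    |x ^ (2 * m + 1) - y ^ (2 * m + 1)| ≤ (2 * m + 1) * (x ^ (2 * m) + y ^ (2 * m)) * |x - y| := by
  have h := abs_pow_sub_pow_le x y (2 * m + 1)
  have h2 : max |x| |y| ^ (2 * m) ≤ x ^ (2 * m) + y ^ (2 * m) := by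
    have hx : |x| ^ (2 * m) = x ^ (2 * m) := (even_two_mul m).pow_abs x
    have hy : |y| ^ (2 * m) = y ^ (2 * m) := (even_two_mul m).pow_abs y
    have px : 0 ≤ x ^ (2 * m) := (even_two_mul m).pow_nonneg x
    have py : 0 ≤ y ^ (2 * m) := (even_two_mul m).pow_nonneg y
    rcases max_choice |x| |y| with e | e <;> rw [e] <;> linarith
  simp only [Nat.add_sub_cancel] at h
  push_cast at h
  refine h.trans ?_
  calc |x - y| * (2 * m + 1) * max |x| |y| ^ (2 * m)
      ≤ |x - y| * (2 * m + 1) * (x ^ (2 * m) + y ^ (2 * m)) := by gcongr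
    _ = _ := by ring

theorem stein_moment {N d : ℕ} (φ : Matrix (Fin N) (Fin N) ℝ → Fin N → ℝ) (i : Fin N)
    (g : Matrix (Fin N) (Fin N) ℝ → ℝ) (m : ℕ) :
    |∑ A ∈ Gr N d, g A ^ (2 * m + 1) * Sop φ i A| ≤
      (2 * m + 1) * ∑ A ∈ Gr N d, g A ^ (2 * m) * vop φ i g A := by
  set h : Matrix (Fin N) (Fin N) ℝ → ℝ := fun A => g A ^ (2 * m + 1) with hh
  have e1 : ∑ A ∈ Gr N d, h A * Sop φ i A =
      ∑ A ∈ Gr N d, WS A i (fun l j k => h A * (φ A j - φ (swi A i l j k) k)) := by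
    refine Finset.sum_congr rfl fun A _ => ?_
    rw [WS_smul]; rfl
  have e2 := WS_invol (d := d) i (fun A B j k => h A * (φ A j - φ B k))
  have e3 : 2 * ∑ A ∈ Gr N d, h A * Sop φ i A =
      ∑ A ∈ Gr N d, WS A i
        (fun l j k => (φ A j - φ (swi A i l j k) k) * (h A - h (swi A i l j k))) := by
    have e7 : 2 * ∑ A ∈ Gr N d, h A * Sop φ i A =
        (∑ A ∈ Gr N d, WS A i fun l j k => h A * (φ A j - φ (swi A i l j k) k)) +
        ∑ A ∈ Gr N d, WS A i fun l j k => h (swi A i l j k) * (φ (swi A i l j k) k - φ A j) := by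
      rw [← e2, ← e1]; ring
    rw [e7, ← Finset.sum_add_distrib]
    refine Finset.sum_congr rfl fun A _ => ?_
    rw [← WS_add]
    congr 1; ext l j k; ring
  have e4 := WS_invol (d := d) i
    (fun A B j k => g A ^ (2 * m) * (|φ A j - φ B k| * |g A - g B|))
  have e5 : ∑ A ∈ Gr N d, g A ^ (2 * m) * vop φ i g A = ∑ A ∈ Gr N d, WS A i
      (fun l j k => g A ^ (2 * m) *
        (|φ A j - φ (swi A i l j k) k| * |g A - g (swi A i l j k)|)) := by
    refine Finset.sum_congr rfl fun A _ => ?_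
    rw [WS_smul]; rfl
  have e6 : |∑ A ∈ Gr N d, WS A i
        (fun l j k => (φ A j - φ (swi A i l j k) k) * (h A - h (swi A i l j k)))| ≤
      (2 * m + 1) * (∑ A ∈ Gr N d, WS A i
      (fun l j k => g A ^ (2 * m) *
        (|φ A j - φ (swi A i l j k) k| * |g A - g (swi A i l j k)|)) + ∑ A ∈ Gr N d, WS A i
      (fun l j k => g (swi A i l j k) ^ (2 * m) *
        (|φ (swi A i l j k) k - φ A j| * |g (swi A i l j k) - g A|))) := by
    refine (Finset.abs_sum_le_sum_abs _ _).trans ?_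
    rw [← Finset.sum_add_distrib, Finset.mul_sum]
    refine Finset.sum_le_sum fun A hA => ?_
    rw [mem_Gr] at hA
    refine (WS_abs hA i _).trans ?_
    rw [← WS_add, ← WS_smul]
    refine WS_mono hA i fun l j k _ => ?_
    rw [abs_mul, abs_sub_comm (φ (swi A i l j k) k), abs_sub_comm (g (swi A i l j k))]
    calc |φ A j - φ (swi A i l j k) k| * |h A - h (swi A i l j k)|
        ≤ |φ A j - φ (swi A i l j k) k| * ((2 * m + 1) * (g A ^ (2 * m) +
          g (swi A i l j k) ^ (2 * m)) * |g A - g (swi A i l j k)|) := by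
          gcongr; exact pow_diff_bound m _ _
      _ = _ := by ring
  rw [← e4, ← e5, ← e3, abs_mul, abs_two] at e6
  linarith

theorem young1 (m : ℕ) (g X : ℝ) (hX : 0 ≤ X) :
    g ^ (2 * m) * X ≤ g ^ (2 * m + 2) / 4 + (4 * X) ^ (m + 1) := by
  have p1 : 0 ≤ g ^ (2 * m) := (even_two_mul m).pow_nonneg g
  have p2 : g ^ (2 * m + 2) = g ^ (2 * m) * g ^ 2 := by ring
  have p3 : 0 ≤ (4 * X) ^ (m + 1) := by positivity
  by_cases h : 4 * X ≤ g ^ 2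
  · rw [p2]; nlinarith
  · push Not at h
    have h1 : g ^ (2 * m) ≤ (4 * X) ^ m := by
      rw [pow_mul]; exact pow_le_pow_left₀ (sq_nonneg g) h.le m
    have h2 : 0 ≤ (4 * X) ^ m := by positivity
    have h3 : 0 ≤ g ^ (2 * m + 2) := by rw [p2]; positivity
    have h4 : g ^ (2 * m) * X ≤ (4 * X) ^ m * X := by gcongr
    have h5 : (4 * X) ^ (m + 1) = 4 * ((4 * X) ^ m * X) := by ring
    have h6 : 0 ≤ (4 * X) ^ m * X := by positivity
    linarith

theorem young2 (m : ℕ) (g X : ℝ) (hX : 0 ≤ X) :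
    |g| ^ (2 * m + 1) * X ≤ g ^ (2 * m + 2) / 4 + (4 * X) ^ (2 * m + 2) := by
  have p2 : g ^ (2 * m + 2) = |g| ^ (2 * m + 1) * |g| := by
    rw [← pow_succ]; exact ((even_two_mul (m + 1)).pow_abs g).symm
  have p1 : 0 ≤ |g| ^ (2 * m + 1) := by positivity
  have p3 : 0 ≤ (4 * X) ^ (2 * m + 2) := by positivity
  by_cases h : 4 * X ≤ |g|
  · rw [p2]; nlinarith
  · push Not at h
    have h1 : |g| ^ (2 * m + 1) ≤ (4 * X) ^ (2 * m + 1) := pow_le_pow_left₀ (abs_nonneg g) h.le _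
    have h4 : |g| ^ (2 * m + 1) * X ≤ (4 * X) ^ (2 * m + 1) * X := by gcongr
    have h3 : 0 ≤ g ^ (2 * m + 2) := by rw [p2]; positivity
    have h2 : 0 ≤ (4 * X) ^ (2 * m + 1) * X := by positivity
    have : (4 * X) ^ (2 * m + 2) = 4 * ((4 * X) ^ (2 * m + 1) * X) := by ring
    linarith

open Classical in
theorem conc_abs {α : Type*} (s : Finset α) (g V e : α → ℝ) (m : ℕ)
    (hV : ∀ A ∈ s, 0 ≤ V A) (he : ∀ A ∈ s, 0 ≤ e A)
    (hm : ∑ A ∈ s, g A ^ (2 * m + 2) ≤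
      (2 * m + 1) * ∑ A ∈ s, g A ^ (2 * m) * V A + ∑ A ∈ s, |g A| ^ (2 * m + 1) * e A)
    (Q : α → Prop) (β L t : ℝ) (hβ : 0 ≤ β) (hL : 0 ≤ L) (ht : 0 < t)
    (hQ : ∀ A ∈ s, Q A → V A ≤ β ^ 2 ∧ e A ≤ β)
    (hall : ∀ A ∈ s, V A ≤ L ^ 2 ∧ e A ≤ L) :
    t ^ (2 * m + 2) * ((s.filter (fun A => t < |g A|)).card : ℝ) ≤
      2 * ((4 * (2 * m + 1)) ^ (m + 1) + 4 ^ (2 * m + 2)) *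
      (β ^ (2 * m + 2) * (s.card : ℝ) + L ^ (2 * m + 2) * ((s.filter (fun A => ¬ Q A)).card : ℝ)) := by
  set C : ℝ := (4 * (2 * m + 1)) ^ (m + 1) + 4 ^ (2 * m + 2) with hC
  have hC0 : 0 ≤ C := by positivity
  have bnd : ∀ A ∈ s, ∀ b : ℝ, 0 ≤ b → V A ≤ b ^ 2 → e A ≤ b →
      (4 * ((2 * m + 1) * V A)) ^ (m + 1) + (4 * e A) ^ (2 * m + 2) ≤ C * b ^ (2 * m + 2) := by
    intro A hA b hb h1 h2
    have v0 := hV A hA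
    have e0 := he A hA
    calc (4 * ((2 * m + 1) * V A)) ^ (m + 1) + (4 * e A) ^ (2 * m + 2)
        ≤ (4 * ((2 * m + 1) * b ^ 2)) ^ (m + 1) + (4 * b) ^ (2 * m + 2) := by gcongr
      _ = C * b ^ (2 * m + 2) := by
        rw [hC, ← mul_assoc, mul_pow _ (b ^ 2), mul_pow 4 b, ← pow_mul]; ring
  have step : ∑ A ∈ s, g A ^ (2 * m + 2) ≤ 2 * ∑ A ∈ s,
      ((4 * ((2 * m + 1) * V A)) ^ (m + 1) + (4 * e A) ^ (2 * m + 2)) := by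
    have a1 : (2 * m + 1) * ∑ A ∈ s, g A ^ (2 * m) * V A ≤
        ∑ A ∈ s, (g A ^ (2 * m + 2) / 4 + (4 * ((2 * m + 1) * V A)) ^ (m + 1)) := by
      rw [Finset.mul_sum]
      refine Finset.sum_le_sum fun A hA => ?_
      have := young1 m (g A) ((2 * m + 1) * V A) (by have := hV A hA; positivity)
      linarith
    have a2 : ∑ A ∈ s, |g A| ^ (2 * m + 1) * e A ≤
        ∑ A ∈ s, (g A ^ (2 * m + 2) / 4 + (4 * e A) ^ (2 * m + 2)) :=
      Finset.sum_le_sum fun A hA => young2 m (g A) (e A) (he A hA)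
    rw [Finset.sum_add_distrib, ← Finset.sum_div] at a1 a2
    rw [Finset.sum_add_distrib]
    linarith
  have fin : ∑ A ∈ s, ((4 * ((2 * m + 1) * V A)) ^ (m + 1) + (4 * e A) ^ (2 * m + 2)) ≤
      C * (β ^ (2 * m + 2) * (s.card : ℝ) +
        L ^ (2 * m + 2) * ((s.filter (fun A => ¬ Q A)).card : ℝ)) := by
    rw [Finset.card_filter, mul_add, ← mul_assoc, ← mul_assoc, mul_comm _ (s.card : ℝ)]
    push_cast
    rw [Finset.mul_sum, ← nsmul_eq_mul, ← Finset.sum_const, ← Finset.sum_add_distrib]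
    refine Finset.sum_le_sum fun A hA => ?_
    by_cases q : Q A
    · obtain ⟨h1, h2⟩ := hQ A hA q
      simpa [q] using bnd A hA β hβ h1 h2
    · obtain ⟨h1, h2⟩ := hall A hA
      have := bnd A hA L hL h1 h2
      have p : 0 ≤ C * β ^ (2 * m + 2) := by positivity
      simp only [q, not_false_eq_true, if_true, mul_one]; linarith
  have mk : t ^ (2 * m + 2) * ((s.filter (fun A => t < |g A|)).card : ℝ) ≤
      ∑ A ∈ s, g A ^ (2 * m + 2) := by
    rw [Finset.card_filter]
    push_cast
    rw [Finset.mul_sum]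
    refine Finset.sum_le_sum fun A hA => ?_
    have e : g A ^ (2 * m + 2) = |g A| ^ (2 * m + 2) := ((even_two_mul (m + 1)).pow_abs (g A)).symm
    split_ifs with h
    · rw [e, mul_one]; gcongr
    · rw [e, mul_zero]; positivity
  linarith

open Classical in
/-- main concentration tool -/
theorem conc_stein {N d : ℕ} (hN : 0 < N) (φ : Matrix (Fin N) (Fin N) ℝ → Fin N → ℝ) (i : Fin N)
    (g : Matrix (Fin N) (Fin N) ℝ → ℝ) (m : ℕ) (Q : Matrix (Fin N) (Fin N) ℝ → Prop)
    (β L t : ℝ) (hβ : 0 ≤ β) (hL : 0 ≤ L) (ht : 0 < t)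
    (hQ : ∀ A, IsAdjMat N d A → Q A → vop φ i g A ≤ N * β ^ 2 ∧ |Sop φ i A - N * g A| ≤ N * β)
    (hall : ∀ A, IsAdjMat N d A → vop φ i g A ≤ N * L ^ 2 ∧ |Sop φ i A - N * g A| ≤ N * L) :
    t ^ (2 * m + 2) * (((Gr N d).filter (fun A => t < |g A|)).card : ℝ) ≤
      2 * ((4 * (2 * m + 1)) ^ (m + 1) + 4 ^ (2 * m + 2)) *
      (β ^ (2 * m + 2) * ((Gr N d).card : ℝ) +
        L ^ (2 * m + 2) * (((Gr N d).filter (fun A => ¬ Q A)).card : ℝ)) := by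
  have hN' : (0 : ℝ) < N := by exact_mod_cast hN
  refine conc_abs (Gr N d) g (fun A => vop φ i g A / N) (fun A => |Sop φ i A - N * g A| / N) m
    ?_ ?_ ?_ Q β L t hβ hL ht ?_ ?_
  · intro A hA
    exact div_nonneg (WS_nn (mem_Gr.1 hA) i fun l j k => by positivity) hN'.le
  · intro A hA; positivity
  · have h1 := stein_moment (d := d) φ i g m
    have h2 : (N : ℝ) * ∑ A ∈ Gr N d, g A ^ (2 * m + 2) =
        ∑ A ∈ Gr N d, g A ^ (2 * m + 1) * Sop φ i A -
        ∑ A ∈ Gr N d, g A ^ (2 * m + 1) * (Sop φ i A - N * g A) := by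
      rw [← Finset.sum_sub_distrib, Finset.mul_sum]
      refine Finset.sum_congr rfl fun A _ => by ring
    have h3 : |∑ A ∈ Gr N d, g A ^ (2 * m + 1) * (Sop φ i A - N * g A)| ≤
        ∑ A ∈ Gr N d, |g A| ^ (2 * m + 1) * |Sop φ i A - N * g A| := by
      refine (Finset.abs_sum_le_sum_abs _ _).trans_eq ?_
      refine Finset.sum_congr rfl fun A _ => by rw [abs_mul, abs_pow]
    simp only [mul_div_assoc']
    rw [← Finset.sum_div, ← Finset.sum_div, ← mul_div_assoc, ← add_div, le_div_iff₀ hN', mul_comm]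
    rw [h2]
    have := abs_le.1 h1
    have := abs_le.1 h3
    linarith [this.1]
  · intro A hA q
    obtain ⟨h1, h2⟩ := hQ A (mem_Gr.1 hA) q
    constructor
    · rw [div_le_iff₀ hN']; linarith
    · rw [div_le_iff₀ hN']; linarith
  · intro A hA
    obtain ⟨h1, h2⟩ := hall A (mem_Gr.1 hA)
    constructor
    · rw [div_le_iff₀ hN']; linarith
    · rw [div_le_iff₀ hN']; linarith

theorem Sop_eq {N d : ℕ} {A : Matrix (Fin N) (Fin N) ℝ} (hA : IsAdjMat N d A)
    (φ : Matrix (Fin N) (Fin N) ℝ → Fin N → ℝ) (i : Fin N) :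
    Sop φ i A = N * (∑ j, A i j * φ A j) - d * (∑ j, φ A j) - ∑ j, A i j * φ A j + d * φ A i +
      WS A i (fun l j k => φ A k - φ (swi A i l j k) k) := by
  have e : Sop φ i A = WS A i (fun l j _ => φ A j) - WS A i (fun l _ k => φ A k) +
      WS A i (fun l j k => φ A k - φ (swi A i l j k) k) := by
    rw [← WS_sub, ← WS_add]; unfold Sop; congr 1; ext l j k; ring
  rw [e, WS_j hA i (fun _ j => φ A j), WS_k hA i (fun _ j => φ A j), ← Finset.sum_sub_distrib]
  congr 1
  have h1 : ∀ l, ∑ j, aw A i l j * φ A j - ∑ j, aw A l i j * φ A j =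
      ∑ j, A i j * φ A j - A i l * φ A l - ∑ j, A l j * φ A j + A l i * φ A i := by
    intro l
    rw [← Finset.sum_sub_distrib]
    have : ∀ j, aw A i l j * φ A j - aw A l i j * φ A j =
        A i j * φ A j - (if j = l then A i l * φ A l else 0) - A l j * φ A j +
        (if j = i then A l i * φ A i else 0) := by
      intro j
      rw [aw_eq hA, aw_eq hA]
      by_cases a : j = l <;> by_cases b : j = i
      · subst a; subst b; simp
      · subst a; simp [b]; ring
      · subst b; simp [a]; ring
      · simp [a, b]; ring
    simp only [this, Finset.sum_add_distrib, Finset.sum_sub_distrib]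
    simp
  simp only [h1, Finset.sum_add_distrib, Finset.sum_sub_distrib]
  rw [Finset.sum_comm (f := fun l j => A l j * φ A j)]
  simp only [← Finset.sum_mul, hA.colsum, ← Finset.mul_sum]
  simp
  ring

section green
variable {N d : ℕ}

def HC (q : ℝ) (A : Matrix (Fin N) (Fin N) ℝ) : Matrix (Fin N) (Fin N) ℂ :=
  Matrix.of fun x y => ((q⁻¹ * A x y : ℝ) : ℂ)

def JN (N : ℕ) : Matrix (Fin N) (Fin N) ℂ := Matrix.of fun _ _ => (N : ℂ)⁻¹

def RR (q : ℝ) (A : Matrix (Fin N) (Fin N) ℝ) (z : ℂ) : Matrix (Fin N) (Fin N) ℂ :=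
  (HC q A - z • 1)⁻¹

def GG (d : ℕ) (q : ℝ) (A : Matrix (Fin N) (Fin N) ℝ) (z : ℂ) : Matrix (Fin N) (Fin N) ℂ :=
  RR q A z - (((d / q : ℝ) : ℂ) - z)⁻¹ • JN N

variable {A : Matrix (Fin N) (Fin N) ℝ} {q : ℝ} {z : ℂ}

theorem HC_herm (hA : IsAdjMat N d A) : (HC q A)ᴴ = HC q A := by
  ext x y
  simp [HC, Matrix.conjTranspose_apply, hA.symm_apply x y]

theorem HC_symm (hA : IsAdjMat N d A) : (HC q A)ᵀ = HC q A := by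
  ext x y
  simp [HC, Matrix.transpose_apply, hA.symm_apply x y]

theorem isUnit_HCz (hA : IsAdjMat N d A) (hz : 0 < z.im) : IsUnit (HC q A - z • 1) := by
  rw [← Matrix.mulVec_injective_iff_isUnit]
  intro v w hvw
  have h0 : (HC q A - z • 1) *ᵥ (v - w) = 0 := by
    rw [Matrix.mulVec_sub]; exact sub_eq_zero.2 hvw
  set u := v - w with hu
  have h1 : HC q A *ᵥ u = z • u := by
    rw [Matrix.sub_mulVec, Matrix.smul_mulVec, Matrix.one_mulVec] at h0
    exact sub_eq_zero.1 h0
  have h2 : star u ⬝ᵥ (HC q A *ᵥ u) = z * (star u ⬝ᵥ u) := by rw [h1, dotProduct_smul]; rfl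
  have h3 : star (star u ⬝ᵥ (HC q A *ᵥ u)) = star u ⬝ᵥ (HC q A *ᵥ u) := by
    rw [← Matrix.star_dotProduct_star, star_star, Matrix.star_mulVec, HC_herm hA,
      ← Matrix.dotProduct_mulVec]
  have h4 : star u ⬝ᵥ u = ((∑ x, ‖u x‖ ^ 2 : ℝ) : ℂ) := by
    simp only [dotProduct, Pi.star_apply]
    push_cast
    refine Finset.sum_congr rfl fun x _ => ?_
    exact_mod_cast Complex.conj_mul' (u x)
  rw [h2, h4] at h3
  have h5 := congrArg Complex.im h3
  have h7 : z.im * ∑ x, ‖u x‖ ^ 2 = 0 := by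
    have e := Complex.im_mul_ofReal z (∑ x, ‖u x‖ ^ 2)
    rw [e] at h5
    have e2 : (star (z * ((∑ x, ‖u x‖ ^ 2 : ℝ) : ℂ))).im = - (z.im * ∑ x, ‖u x‖ ^ 2) := by
      rw [← e]; rfl
    rw [e2] at h5; linarith
  have h6 : ∑ x, ‖u x‖ ^ 2 = 0 := by
    rcases mul_eq_zero.1 h7 with h | h
    · exact absurd h hz.ne'
    · exact h
  have : u = 0 := by
    ext x
    have := (Finset.sum_eq_zero_iff_of_nonneg (fun x _ => by positivity)).1 h6 x (Finset.mem_univ x)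
    simpa using this
  exact sub_eq_zero.1 this

theorem J_mul_H (hA : IsAdjMat N d A) : JN N * HC q A = ((d / q : ℝ) : ℂ) • JN N := by
  ext x y
  simp only [Matrix.mul_apply, JN, HC, Matrix.of_apply, Matrix.smul_apply, smul_eq_mul]
  rw [← Finset.mul_sum, ← Complex.ofReal_sum, ← Finset.mul_sum, hA.colsum, mul_comm]
  congr 2; ring

theorem J_mul_J (hN : 0 < N) : JN N * JN N = JN N := by
  ext x y
  have : (N : ℂ) ≠ 0 := by exact_mod_cast hN.ne'
  simp [Matrix.mul_apply, JN]
  field_simp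

theorem dq_ne (hz : 0 < z.im) (r : ℝ) : (r : ℂ) - z ≠ 0 := by
  intro h
  have := congrArg Complex.im h
  simp at this; exact hz.ne' this

theorem J_mul_G (hN : 0 < N) (hA : IsAdjMat N d A) (hz : 0 < z.im) : JN N * GG d q A z = 0 := by
  have hc := dq_ne hz (d / q)
  have h1 : (HC q A - z • 1) * RR q A z = 1 :=
    Matrix.mul_nonsing_inv _ ((Matrix.isUnit_iff_isUnit_det _).1 (isUnit_HCz hA hz))
  have h2 : JN N = (((d / q : ℝ) : ℂ) - z) • (JN N * RR q A z) := by
    calc JN N = JN N * ((HC q A - z • 1) * RR q A z) := by rw [h1, mul_one]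
      _ = _ := by
        rw [← mul_assoc, mul_sub, J_mul_H hA, Matrix.mul_smul, mul_one, ← sub_smul, Matrix.smul_mul]
  have h3 : JN N * RR q A z = (((d / q : ℝ) : ℂ) - z)⁻¹ • JN N := by
    conv_rhs => rw [h2]
    rw [smul_smul, inv_mul_cancel₀ hc, one_smul]
  rw [GG, mul_sub, h3, Matrix.mul_smul, J_mul_J hN, sub_self]

theorem H_mul_J (hA : IsAdjMat N d A) : HC q A * JN N = ((d / q : ℝ) : ℂ) • JN N := by
  have h := congrArg Matrix.transpose (J_mul_H (q := q) hA)
  rw [Matrix.transpose_mul, HC_symm hA, Matrix.transpose_smul] at h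
  exact h

theorem G_symm (hA : IsAdjMat N d A) : (GG d q A z)ᵀ = GG d q A z := by
  have : (RR q A z)ᵀ = RR q A z := by
    rw [RR, Matrix.transpose_nonsing_inv, Matrix.transpose_sub, HC_symm hA, Matrix.transpose_smul,
      Matrix.transpose_one]
  rw [GG, Matrix.transpose_sub, this, Matrix.transpose_smul]
  rfl

theorem G_sa (hA : IsAdjMat N d A) (x y : Fin N) : GG d q A z x y = GG d q A z y x :=
  congrFun (congrFun (G_symm (d := d) (q := q) (z := z) hA) y) x

theorem H_mul_G (hA : IsAdjMat N d A) (hz : 0 < z.im) :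
    HC q A * GG d q A z = z • GG d q A z + (1 - JN N) := by
  have hc := dq_ne hz (d / q)
  have h1 : (HC q A - z • 1) * RR q A z = 1 :=
    Matrix.mul_nonsing_inv _ ((Matrix.isUnit_iff_isUnit_det _).1 (isUnit_HCz hA hz))
  have h2 : HC q A * RR q A z = 1 + z • RR q A z := by
    rw [sub_mul, Matrix.smul_mul, one_mul] at h1
    rw [← h1]; abel
  rw [GG, mul_sub, h2, Matrix.mul_smul, H_mul_J hA, smul_sub, smul_smul, smul_smul]
  have : (((d / q : ℝ) : ℂ) - z)⁻¹ * ((d / q : ℝ) : ℂ) = (((d / q : ℝ) : ℂ) - z)⁻¹ * z + 1 := by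
    field_simp; ring
  rw [this, add_smul, one_smul, mul_comm _ z]; abel

theorem G_mul_J (hN : 0 < N) (hA : IsAdjMat N d A) (hz : 0 < z.im) : GG d q A z * JN N = 0 := by
  have h := congrArg Matrix.transpose (J_mul_G (q := q) hN hA hz)
  rw [Matrix.transpose_mul, G_symm hA, Matrix.transpose_zero] at h
  exact h

theorem G_mul_H (hA : IsAdjMat N d A) (hz : 0 < z.im) :
    GG d q A z * HC q A = z • GG d q A z + (1 - JN N) := by
  have h := congrArg Matrix.transpose (H_mul_G (q := q) hA hz)
  rw [Matrix.transpose_mul, G_symm hA, HC_symm hA, Matrix.transpose_add, Matrix.transpose_smul,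
    G_symm hA, Matrix.transpose_sub, Matrix.transpose_one] at h
  exact h

/-- entrywise equation -/
theorem AG_entry (hq : 0 < q) (hA : IsAdjMat N d A) (hz : 0 < z.im) (i x : Fin N) :
    ∑ j, (A i j : ℂ) * GG d q A z j x =
      q * (z * GG d q A z i x + (if i = x then 1 else 0) - (N : ℂ)⁻¹) := by
  have h := congrFun (congrFun (H_mul_G (q := q) hA hz) i) x
  have hq' : (q : ℂ) ≠ 0 := by exact_mod_cast hq.ne'
  simp only [Matrix.mul_apply, Matrix.add_apply, Matrix.smul_apply, Matrix.sub_apply, JN, HC,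
    Matrix.of_apply, Matrix.one_apply, smul_eq_mul] at h
  rw [add_sub_assoc, ← h, Finset.mul_sum]
  refine Finset.sum_congr rfl fun j _ => ?_
  push_cast
  field_simp

theorem G_colsum (hN : 0 < N) (hA : IsAdjMat N d A) (hz : 0 < z.im) (x : Fin N) :
    ∑ j, GG d q A z j x = 0 := by
  have h := congrFun (congrFun (J_mul_G (q := q) hN hA hz) x) x
  have : (N : ℂ)⁻¹ ≠ 0 := by simpa using hN.ne'
  simp only [Matrix.mul_apply, JN, Matrix.of_apply, ← Finset.mul_sum, Matrix.zero_apply] at h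
  exact (mul_eq_zero.1 h).resolve_left this

theorem G_res (hN : 0 < N) {B : Matrix (Fin N) (Fin N) ℝ} (hA : IsAdjMat N d A)
    (hB : IsAdjMat N d B) (hz : 0 < z.im) :
    GG d q A z - GG d q B z = GG d q A z * (HC q B - HC q A) * GG d q B z := by
  rw [mul_sub, sub_mul, mul_assoc, H_mul_G hB hz, G_mul_H hA hz]
  simp only [mul_add, add_mul, mul_sub, sub_mul, mul_one, one_mul, J_mul_G hN hB hz,
    G_mul_J hN hA hz, Matrix.mul_smul, Matrix.smul_mul]
  simp

theorem G_two (hN : 0 < N) {w : ℂ} (hA : IsAdjMat N d A) (hz : 0 < z.im) (hw : 0 < w.im) :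
    GG d q A z - GG d q A w = (z - w) • (GG d q A z * GG d q A w) := by
  have h : GG d q A z * (HC q A * GG d q A w) = (GG d q A z * HC q A) * GG d q A w :=
    (mul_assoc _ _ _).symm
  rw [H_mul_G hA hw, G_mul_H hA hz] at h
  simp only [mul_add, add_mul, mul_sub, sub_mul, mul_one, one_mul, J_mul_G hN hA hw,
    G_mul_J hN hA hz, Matrix.mul_smul, Matrix.smul_mul, sub_zero] at h
  rw [sub_smul, sub_eq_sub_iff_add_eq_add, add_comm, h]

theorem ward (hN : 0 < N) (hA : IsAdjMat N d A) (hz : 0 < z.im) (x : Fin N) :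
    ∑ j, ‖GG d q A z j x‖ ^ 2 = (GG d q A z x x).im / z.im := by
  set G := GG d q A z with hG
  have hJh : (JN N)ᴴ = JN N := by ext a b; simp [JN, Matrix.conjTranspose_apply]
  have h1 := congrArg Matrix.conjTranspose (H_mul_G (q := q) hA hz)
  rw [Matrix.conjTranspose_mul, HC_herm hA, Matrix.conjTranspose_add, Matrix.conjTranspose_smul,
    Matrix.conjTranspose_sub, Matrix.conjTranspose_one, hJh] at h1
  have h2 := congrArg Matrix.conjTranspose (J_mul_G (q := q) hN hA hz)
  rw [Matrix.conjTranspose_mul, hJh, Matrix.conjTranspose_zero] at h2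
  rw [← hG] at h1 h2
  have hJG : JN N * G = 0 := J_mul_G hN hA hz
  have h : Gᴴ * (HC q A * G) = (Gᴴ * HC q A) * G := (mul_assoc _ _ _).symm
  rw [h1, H_mul_G hA hz, ← hG] at h
  simp only [mul_add, add_mul, mul_sub, sub_mul, mul_one, one_mul, h2, hJG, Matrix.mul_smul, Matrix.smul_mul, sub_zero] at h
  have h3 := congrArg Complex.im (congrFun (congrFun h x) x)
  have h4 : (Gᴴ * G) x x = ((∑ j, ‖G j x‖ ^ 2 : ℝ) : ℂ) := by
    simp only [Matrix.mul_apply, Matrix.conjTranspose_apply]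
    push_cast
    refine Finset.sum_congr rfl fun j _ => ?_
    exact_mod_cast Complex.conj_mul' (G j x)
  simp only [Matrix.add_apply, Matrix.smul_apply, h4, smul_eq_mul, Complex.add_im,
    Complex.im_mul_ofReal, Matrix.conjTranspose_apply] at h3
  have c1 : (star (G x x)).im = - (G x x).im := rfl
  have c2 : (star z).im = - z.im := rfl
  rw [c1, c2] at h3
  rw [eq_div_iff hz.ne']
  linarith

theorem G_le_inv (hN : 0 < N) (hA : IsAdjMat N d A) (hz : 0 < z.im) (x y : Fin N) :
    ‖GG d q A z x y‖ ≤ 1 / z.im := by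
  have hd : ∀ y, ∀ x, ‖GG d q A z x y‖ ^ 2 ≤ (GG d q A z y y).im / z.im := by
    intro y x
    rw [← ward hN hA hz y]
    exact Finset.single_le_sum (f := fun j => ‖GG d q A z j y‖ ^ 2) (fun j _ => by positivity)
      (Finset.mem_univ x)
  have h1 := hd y y
  have h2 := hd y x
  have h3 : (GG d q A z y y).im ≤ ‖GG d q A z y y‖ := (le_abs_self _).trans (Complex.abs_im_le_norm _)
  have h4 : ‖GG d q A z y y‖ ≤ 1 / z.im := by
    rw [le_div_iff₀ hz] at h1 ⊢
    by_contra hc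
    push Not at hc
    have : 0 ≤ ‖GG d q A z y y‖ := norm_nonneg _
    nlinarith
  have h5 : ‖GG d q A z x y‖ ^ 2 ≤ (1 / z.im) ^ 2 := by
    refine h2.trans ?_
    rw [pow_two, div_eq_mul_one_div]
    gcongr
    exact h3.trans h4
  exact (sq_le_sq₀ (norm_nonneg _) (by positivity)).1 h5

theorem G_scale (hN : 0 < N) (hA : IsAdjMat N d A) {E η M K : ℝ} (hη : 0 < η) (hM : 1 ≤ M)
    (hK : ∀ x y, ‖GG d q A ⟨E, η⟩ x y‖ ≤ K) (x y : Fin N) :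
    ‖GG d q A ⟨E, η / M⟩ x y‖ ≤ 4 * M * K := by
  have hM0 : 0 < M := by linarith
  have hK0 : 0 ≤ K := (norm_nonneg _).trans (hK x y)
  have hz : 0 < (⟨E, η / M⟩ : ℂ).im := by simp; positivity
  have hw : 0 < (⟨E, η⟩ : ℂ).im := hη
  have im_le : ∀ c : ℂ, c.im ≤ ‖c‖ := fun c => (le_abs_self _).trans (Complex.abs_im_le_norm _)
  have key : ∀ x y, ‖GG d q A ⟨E, η / M⟩ x y‖ ≤
      K + Real.sqrt (‖GG d q A ⟨E, η / M⟩ x x‖ * (M * K)) := by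
    intro x y
    have h := congrFun (congrFun (G_two (q := q) hN hA hz hw) x) y
    simp only [Matrix.sub_apply, Matrix.smul_apply, smul_eq_mul, Matrix.mul_apply] at h
    have hzw : ‖(⟨E, η / M⟩ : ℂ) - ⟨E, η⟩‖ ≤ η := by
      have e : (⟨E, η / M⟩ : ℂ) - ⟨E, η⟩ = ((-(η - η / M) : ℝ) : ℂ) * Complex.I := by
        apply Complex.ext <;> simp
      rw [e, norm_mul, Complex.norm_I, mul_one, Complex.norm_real, norm_neg, Real.norm_eq_abs]
      have h1 : η / M ≤ η := div_le_self hη.le hM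
      have h2 : 0 < η / M := by positivity
      rw [abs_of_nonneg (by linarith)]; linarith
    have hcs : ‖∑ j, GG d q A ⟨E, η / M⟩ x j * GG d q A ⟨E, η⟩ j y‖ ≤
        Real.sqrt (‖GG d q A ⟨E, η / M⟩ x x‖ * (M * K) / η ^ 2) := by
      refine (norm_sum_le _ _).trans (Real.le_sqrt_of_sq_le ?_)
      simp only [norm_mul]
      refine (Finset.sum_mul_sq_le_sq_mul_sq _ _ _).trans ?_
      have e1 : ∑ j, ‖GG d q A ⟨E, η / M⟩ x j‖ ^ 2 ≤ ‖GG d q A ⟨E, η / M⟩ x x‖ / (η / M) := by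
        simp only [G_sa hA x]
        rw [ward hN hA hz x]
        gcongr
        · exact im_le _
      have e2 : ∑ j, ‖GG d q A ⟨E, η⟩ j y‖ ^ 2 ≤ K / η := by
        rw [ward hN hA hw y]
        gcongr
        exact (im_le _).trans (hK y y)
      calc _ ≤ ‖GG d q A ⟨E, η / M⟩ x x‖ / (η / M) * (K / η) := by gcongr
        _ = _ := by field_simp
    have hf : ‖GG d q A ⟨E, η / M⟩ x y - GG d q A ⟨E, η⟩ x y‖ ≤
        Real.sqrt (‖GG d q A ⟨E, η / M⟩ x x‖ * (M * K)) := by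
      rw [h, norm_mul]
      calc _ ≤ η * Real.sqrt (‖GG d q A ⟨E, η / M⟩ x x‖ * (M * K) / η ^ 2) := by gcongr
        _ = _ := by
          rw [Real.sqrt_div' _ (by positivity), Real.sqrt_sq hη.le]; field_simp
    have := norm_sub_norm_le (GG d q A ⟨E, η / M⟩ x y) (GG d q A ⟨E, η⟩ x y)
    linarith [hK x y]
  have hdiag : ∀ x, ‖GG d q A ⟨E, η / M⟩ x x‖ ≤ (2 + M) * K := by
    intro x
    have h1 := key x x
    set a := ‖GG d q A ⟨E, η / M⟩ x x‖
    have ha : 0 ≤ a := norm_nonneg _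
    have h2 : Real.sqrt (a * (M * K)) ≤ (a + M * K) / 2 := by
      rw [Real.sqrt_le_left (by positivity)]
      nlinarith [sq_nonneg (a - M * K)]
    nlinarith
  have h1 := key x y
  have h2 : Real.sqrt (‖GG d q A ⟨E, η / M⟩ x x‖ * (M * K)) ≤ (2 + M) * K := by
    rw [Real.sqrt_le_left (by positivity), pow_two]
    exact mul_le_mul (hdiag x) (by nlinarith) (by positivity) (by positivity)
  nlinarith

/-- row expansion of one switch -/
theorem GXG (G G' : Matrix (Fin N) (Fin N) ℂ) (i l j k a x : Fin N) :
    (G * (HC q (swi A i l j k) - HC q A) * G') a x = (q : ℂ)⁻¹ *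
      ((G a i - G a l) * (G' k x - G' j x) + (G a k - G a j) * (G' i x - G' l x)) := by
  have e : HC q (swi A i l j k) - HC q A =
      (q : ℂ)⁻¹ • (vecMulVec (fun x => ((sv i l x : ℝ) : ℂ)) (fun x => ((sv k j x : ℝ) : ℂ)) +
        vecMulVec (fun x => ((sv k j x : ℝ) : ℂ)) (fun x => ((sv i l x : ℝ) : ℂ))) := by
    ext x y
    simp [HC, swi, Xm, vecMulVec_apply]
    ring
  have f1 : ∀ a b : Fin N, (G *ᵥ fun x => ((sv a b x : ℝ) : ℂ)) = fun c => G c a - G c b := by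
    intro a b
    ext c
    simp [Matrix.mulVec, dotProduct, sv, mul_sub, Finset.sum_sub_distrib, apply_ite Complex.ofReal]
  have f2 : ∀ a b : Fin N, ((fun x => ((sv a b x : ℝ) : ℂ)) ᵥ* G') = fun c => G' a c - G' b c := by
    intro a b
    ext c
    simp [Matrix.vecMul, dotProduct, sv, sub_mul, Finset.sum_sub_distrib, apply_ite Complex.ofReal]
  rw [e, Matrix.mul_smul, Matrix.smul_mul, mul_add, add_mul, Matrix.mul_vecMulVec,
    Matrix.mul_vecMulVec, Matrix.vecMulVec_mul, Matrix.vecMulVec_mul]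
  simp only [f1, f2, Matrix.smul_apply, Matrix.add_apply, vecMulVec_apply, smul_eq_mul]

end green

section pert
variable {N d : ℕ} {A : Matrix (Fin N) (Fin N) ℝ} {q : ℝ} {z : ℂ}

theorem norm4 {Γ Γ' : ℝ} (hΓ : 0 ≤ Γ) {a b c d e f g h : ℂ} (ha : ‖a‖ ≤ Γ) (hb : ‖b‖ ≤ Γ)
    (hc : ‖c‖ ≤ Γ') (hd : ‖d‖ ≤ Γ') (he : ‖e‖ ≤ Γ) (hf : ‖f‖ ≤ Γ)
    (hg : ‖g‖ ≤ Γ') (hh : ‖h‖ ≤ Γ') :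
    ‖(a - b) * (c - d) + (e - f) * (g - h)‖ ≤ 8 * Γ * Γ' := by
  have hab : ‖a - b‖ ≤ 2 * Γ := (norm_sub_le _ _).trans (by linarith)
  have hcd : ‖c - d‖ ≤ 2 * Γ' := (norm_sub_le _ _).trans (by linarith)
  have hef : ‖e - f‖ ≤ 2 * Γ := (norm_sub_le _ _).trans (by linarith)
  have hgh : ‖g - h‖ ≤ 2 * Γ' := (norm_sub_le _ _).trans (by linarith)
  calc _ ≤ ‖a - b‖ * ‖c - d‖ + ‖e - f‖ * ‖g - h‖ := by
        refine (norm_add_le _ _).trans ?_; rw [norm_mul, norm_mul]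
    _ ≤ 2 * Γ * (2 * Γ') + 2 * Γ * (2 * Γ') := by gcongr
    _ = _ := by ring

theorem G_diff (hN : 0 < N) (hA : IsAdjMat N d A) (hz : 0 < z.im) {i l j k : Fin N}
    (hA' : IsAdjMat N d (swi A i l j k)) (a x : Fin N) :
    GG d q A z a x - GG d q (swi A i l j k) z a x = (q : ℂ)⁻¹ *
      ((GG d q A z a i - GG d q A z a l) *
        (GG d q (swi A i l j k) z k x - GG d q (swi A i l j k) z j x) +
       (GG d q A z a k - GG d q A z a j) *
        (GG d q (swi A i l j k) z i x - GG d q (swi A i l j k) z l x)) := by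
  rw [← GXG (A := A), ← G_res hN hA hA' hz]; rfl

theorem pert (hN : 0 < N) (hA : IsAdjMat N d A) (hz : 0 < z.im) {i l j k : Fin N}
    (hA' : IsAdjMat N d (swi A i l j k)) {Γ : ℝ} (hq : 0 < q) (hΓq : 16 * Γ ≤ q)
    (hΓ : ∀ a b, ‖GG d q A z a b‖ ≤ Γ) :
    (∀ a b, ‖GG d q (swi A i l j k) z a b‖ ≤ 2 * Γ) ∧
    ∀ a b, ‖GG d q A z a b - GG d q (swi A i l j k) z a b‖ ≤ 16 * Γ ^ 2 / q := by
  have hΓ0 : 0 ≤ Γ := (norm_nonneg _).trans (hΓ i i)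
  have step : ∀ Γ', (∀ a b, ‖GG d q (swi A i l j k) z a b‖ ≤ Γ') →
      ∀ a b, ‖GG d q A z a b - GG d q (swi A i l j k) z a b‖ ≤ 8 * Γ * Γ' / q := by
    intro Γ' h' a b
    rw [G_diff hN hA hz hA', norm_mul, norm_inv, Complex.norm_real, Real.norm_of_nonneg hq.le,
      div_eq_inv_mul]
    exact mul_le_mul_of_nonneg_left (norm4 hΓ0 (hΓ _ _) (hΓ _ _) (h' _ _) (h' _ _) (hΓ _ _)
      (hΓ _ _) (h' _ _) (h' _ _)) (by positivity)
  obtain ⟨p, -, hp⟩ := Finset.exists_max_image (Finset.univ : Finset (Fin N × Fin N))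
    (fun p => ‖GG d q (swi A i l j k) z p.1 p.2‖) ⟨(i, i), Finset.mem_univ _⟩
  have h1 : ∀ a b, ‖GG d q (swi A i l j k) z a b‖ ≤ 2 * Γ := by
    have h2 := step _ (fun a b => hp (a, b) (Finset.mem_univ _)) p.1 p.2
    set T := ‖GG d q (swi A i l j k) z p.1 p.2‖ with hT
    have hT0 : 0 ≤ T := norm_nonneg _
    have h3 : 8 * Γ * T / q ≤ T / 2 := by
      rw [div_le_div_iff₀ hq (by norm_num)]; nlinarith
    have h4 := norm_sub_norm_le (GG d q (swi A i l j k) z p.1 p.2) (GG d q A z p.1 p.2)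
    rw [norm_sub_rev] at h4
    have h5 := hΓ p.1 p.2
    intro a b
    have := hp (a, b) (Finset.mem_univ _)
    simp only at this
    linarith
  refine ⟨h1, fun a b => (step _ h1 a b).trans (le_of_eq (by ring))⟩

/-- generic functional -/
def gL (φ : Matrix (Fin N) (Fin N) ℝ → Fin N → ℝ) (d : ℕ) (i : Fin N)
    (A : Matrix (Fin N) (Fin N) ℝ) : ℝ :=
  ∑ j, A i j * φ A j - (d / N : ℝ) * ∑ j, φ A j

theorem sum_abs_le {f : Fin N → ℝ} {B : ℝ} (h : ∀ j, |f j| ≤ B) : |∑ j, f j| ≤ N * B := by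
  refine (Finset.abs_sum_le_sum_abs _ _).trans ((Finset.sum_le_sum fun j _ => h j).trans ?_)
  simp

theorem Asum_abs_le (hA : IsAdjMat N d A) (i : Fin N) {f : Fin N → ℝ} {B : ℝ}
    (h : ∀ j, |f j| ≤ B) : |∑ j, A i j * f j| ≤ d * B := by
  refine (Finset.abs_sum_le_sum_abs _ _).trans ?_
  rw [← hA.2.2.2 i, Finset.sum_mul]
  refine Finset.sum_le_sum fun j _ => ?_
  rw [abs_mul, abs_of_nonneg (hA.nn i j)]
  exact mul_le_mul_of_nonneg_left (h j) (hA.nn i j)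

theorem sv_abs (i l x : Fin N) : |sv i l x| ≤ 1 := by
  unfold sv; split_ifs <;> norm_num

theorem sum_sv_mul (i l : Fin N) (f : Fin N → ℝ) : ∑ x, sv i l x * f x = f i - f l := by
  simp [sv, sub_mul, Finset.sum_sub_distrib]

theorem L1det (hN : 0 < N) (hA : IsAdjMat N d A)
    (φ : Matrix (Fin N) (Fin N) ℝ → Fin N → ℝ) (i : Fin N) {B B1 : ℝ}
    (h1 : ∀ j, |φ A j| ≤ B)
    (h2 : ∀ l j k, ww A i l j k ≠ 0 → ∀ a, |φ A a - φ (swi A i l j k) a| ≤ B1) (hB1 : 0 ≤ B1) :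
    vop φ i (gL φ d i) A ≤ N * (d * ((2 * B + B1) * (2 * d * B1 + 4 * B + 4 * B1))) ∧
    |Sop φ i A - N * gL φ d i A| ≤ N * (2 * d * B / N + d * B1) := by
  have hN' : (0 : ℝ) < N := by exact_mod_cast hN
  have hB : 0 ≤ B := (abs_nonneg _).trans (h1 i)
  have hd0 : (0 : ℝ) ≤ d := by positivity
  constructor
  · have h3 : ∀ l j k, ww A i l j k ≠ 0 →
        |φ A j - φ (swi A i l j k) k| * |gL φ d i A - gL φ d i (swi A i l j k)| ≤
        (2 * B + B1) * (2 * d * B1 + 4 * B + 4 * B1) := by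
      intro l j k hw
      have hd := h2 l j k hw
      set A' := swi A i l j k with hA'
      have hφ' : ∀ a, |φ A' a| ≤ B + B1 := fun a => by
        have := abs_sub_abs_le_abs_sub (φ A' a) (φ A a)
        rw [abs_sub_comm] at this
        linarith [hd a, h1 a]
      refine mul_le_mul ?_ ?_ (abs_nonneg _) (by positivity)
      · exact (abs_sub _ _).trans (by linarith [h1 j, hφ' k])
      · have e : gL φ d i A - gL φ d i A' = ∑ y, A i y * (φ A y - φ A' y)
            - (d / N : ℝ) * ∑ y, (φ A y - φ A' y)
            - (sv i l i * (φ A' k - φ A' j) + sv k j i * (φ A' i - φ A' l)) := by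
          have e1 : ∑ y, A' i y * φ A' y = ∑ y, A i y * φ A' y +
              (sv i l i * (φ A' k - φ A' j) + sv k j i * (φ A' i - φ A' l)) := by
            have : ∀ y, A' i y * φ A' y = A i y * φ A' y + (sv i l i * (sv k j y * φ A' y) +
                sv k j i * (sv i l y * φ A' y)) := by
              intro y
              rw [hA']; simp only [swi, Xm, Matrix.add_apply, Matrix.of_apply]; ring
            simp only [this, Finset.sum_add_distrib, ← Finset.mul_sum, sum_sv_mul]
          unfold gL
          rw [e1]
          simp only [mul_sub, Finset.sum_sub_distrib]; ring
        have b1 := Asum_abs_le hA i hd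
        have b2 := sum_abs_le hd
        have b3 : |(d / N : ℝ) * ∑ y, (φ A y - φ A' y)| ≤ d * B1 := by
          rw [abs_mul, abs_of_nonneg (by positivity)]
          calc _ ≤ (d / N : ℝ) * (N * B1) := by gcongr
            _ = _ := by field_simp
        have b4 : ∀ s a b, |s| ≤ 1 → |s * (φ A' a - φ A' b)| ≤ 2 * B + 2 * B1 := by
          intro s a b hs
          rw [abs_mul]
          have : |φ A' a - φ A' b| ≤ 2 * B + 2 * B1 :=
            (abs_sub _ _).trans (by linarith [hφ' a, hφ' b])
          nlinarith [abs_nonneg (φ A' a - φ A' b)]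
        have c1 := b4 _ k j (sv_abs i l i)
        have c2 := b4 _ i l (sv_abs k j i)
        rw [e]
        rw [abs_le] at *
        constructor <;> linarith
    have h4 := (WS_mono hA i h3).trans (WS_const hA i (by positivity))
    unfold vop
    linarith
  · rw [Sop_eq hA]
    have e : N * (∑ j, A i j * φ A j) - d * (∑ j, φ A j) - ∑ j, A i j * φ A j + d * φ A i +
      WS A i (fun l j k => φ A k - φ (swi A i l j k) k) - N * gL φ d i A =
      - ∑ j, A i j * φ A j + d * φ A i + WS A i (fun l j k => φ A k - φ (swi A i l j k) k) := by
      unfold gL; field_simp; ring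
    rw [e]
    have b1 := Asum_abs_le hA i h1
    have b2 : |WS A i (fun l j k => φ A k - φ (swi A i l j k) k)| ≤ N * d * B1 :=
      (WS_abs hA i _).trans ((WS_mono hA i fun l j k hw => h2 l j k hw k).trans (WS_const hA i hB1))
    have b3 : |d * φ A i| ≤ d * B := by
      rw [abs_mul, abs_of_nonneg hd0]; exact mul_le_mul_of_nonneg_left (h1 i) hd0
    have e2 : (N : ℝ) * (2 * d * B / N + d * B1) = 2 * d * B + N * d * B1 := by field_simp
    rw [e2]
    rw [abs_le] at *
    constructor <;> linarith
end pert

section main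
variable {N d : ℕ} {A : Matrix (Fin N) (Fin N) ℝ} {q : ℝ} {z : ℂ}

def mb (d : ℕ) (q : ℝ) (A : Matrix (Fin N) (Fin N) ℝ) (z : ℂ) : ℂ := (N : ℂ)⁻¹ * ∑ k, GG d q A z k k

def phiM (d : ℕ) (q : ℝ) (z c : ℂ) (x : Fin N) (A : Matrix (Fin N) (Fin N) ℝ) (j : Fin N) : ℝ :=
  (c * GG d q A z j x).re

def gM (d : ℕ) (q : ℝ) (z c : ℂ) (i x : Fin N) (A : Matrix (Fin N) (Fin N) ℝ) : ℝ :=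
  q * (c * ((z + mb d q A z) * GG d q A z i x + (if i = x then 1 else 0) - (N : ℂ)⁻¹)).re

theorem re_le (c w : ℂ) (hc : ‖c‖ = 1) : |(c * w).re| ≤ ‖w‖ := by
  refine (Complex.abs_re_le_norm _).trans ?_
  rw [norm_mul, hc, one_mul]

theorem phiM_sum (hN : 0 < N) (hA : IsAdjMat N d A) (hz : 0 < z.im) (c : ℂ) (x : Fin N) :
    ∑ j, phiM d q z c x A j = 0 := by
  unfold phiM
  rw [← Complex.re_sum, ← Finset.mul_sum, G_colsum hN hA hz]; simp

theorem phiM_Asum (hq : 0 < q) (hA : IsAdjMat N d A) (hz : 0 < z.im) (c : ℂ) (i x : Fin N) :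
    ∑ j, A i j * phiM d q z c x A j =
      q * (c * (z * GG d q A z i x + (if i = x then 1 else 0) - (N : ℂ)⁻¹)).re := by
  have h := AG_entry hq hA hz i x
  have e : ∑ j, A i j * phiM d q z c x A j = (c * ∑ j, (A i j : ℂ) * GG d q A z j x).re := by
    rw [Finset.mul_sum, Complex.re_sum]
    refine Finset.sum_congr rfl fun j _ => ?_
    unfold phiM
    rw [mul_left_comm, Complex.re_ofReal_mul]
  rw [e, h, mul_left_comm, Complex.re_ofReal_mul]

theorem gM_eq (hq : 0 < q) (hA : IsAdjMat N d A) (hz : 0 < z.im) (c : ℂ) (i x : Fin N) :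
    gM d q z c i x A = ∑ j, A i j * phiM d q z c x A j +
      q * (c * (mb d q A z * GG d q A z i x)).re := by
  rw [phiM_Asum hq hA hz, ← mul_add, ← Complex.add_re]
  unfold gM
  congr 2; ring

theorem mb_le (hN : 0 < N) {Γ : ℝ} (hΓ : ∀ a b, ‖GG d q A z a b‖ ≤ Γ) : ‖mb d q A z‖ ≤ Γ := by
  have hN' : (0 : ℝ) < N := by exact_mod_cast hN
  unfold mb
  rw [norm_mul, norm_inv, Complex.norm_natCast]
  calc _ ≤ (N : ℝ)⁻¹ * ∑ k : Fin N, Γ := by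
        gcongr
        exact (norm_sum_le _ _).trans (Finset.sum_le_sum fun k _ => hΓ k k)
    _ = Γ := by simp; field_simp

theorem mb_sub_le (hN : 0 < N) {Γ : ℝ} {A' : Matrix (Fin N) (Fin N) ℝ}
    (hΓ : ∀ a b, ‖GG d q A z a b - GG d q A' z a b‖ ≤ Γ) :
    ‖mb d q A z - mb d q A' z‖ ≤ Γ := by
  have hN' : (0 : ℝ) < N := by exact_mod_cast hN
  unfold mb
  rw [← mul_sub, ← Finset.sum_sub_distrib, norm_mul, norm_inv, Complex.norm_natCast]
  calc _ ≤ (N : ℝ)⁻¹ * ∑ k : Fin N, Γ := by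
        gcongr
        exact (norm_sum_le _ _).trans (Finset.sum_le_sum fun k _ => hΓ k k)
    _ = Γ := by simp; field_simp

section ws
variable {κ : ℝ} (hA : IsAdjMat N d A)
  (hk : ∀ l x, ∑ k, A l k * ‖GG d q A z k x‖ ≤ d * κ)
include hA hk

theorem ws_k (i : Fin N) (f : Fin N → Fin N) :
    WS A i (fun l _ k => ‖GG d q A z k (f l)‖) ≤ N * d * κ := by
  rw [WS_k hA i (fun l k => ‖GG d q A z k (f l)‖)]
  calc _ ≤ ∑ l : Fin N, (d * κ : ℝ) := by
        refine Finset.sum_le_sum fun l _ => le_trans ?_ (hk l (f l))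
        exact Finset.sum_le_sum fun k _ => mul_le_mul_of_nonneg_right (aw_le hA _ _ _) (norm_nonneg _)
    _ = _ := by simp; ring

theorem ws_j (i : Fin N) (x : Fin N) :
    WS A i (fun _ j _ => ‖GG d q A z j x‖) ≤ N * d * κ := by
  rw [WS_j hA i (fun _ j => ‖GG d q A z j x‖)]
  calc _ ≤ ∑ l : Fin N, (d * κ : ℝ) := by
        refine Finset.sum_le_sum fun l _ => le_trans ?_ (hk i x)
        exact Finset.sum_le_sum fun k _ => mul_le_mul_of_nonneg_right (aw_le hA _ _ _) (norm_nonneg _)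
    _ = _ := by simp; ring

theorem ws_l (i : Fin N) (x : Fin N) :
    WS A i (fun l _ _ => ‖GG d q A z l x‖) ≤ N * d * κ := by
  rw [WS_j hA i (fun l _ => ‖GG d q A z l x‖)]
  calc _ = ∑ l, nw A i l * ‖GG d q A z l x‖ := by
        refine Finset.sum_congr rfl fun l _ => by rw [← Finset.sum_mul]; rfl
    _ ≤ ∑ l, (∑ a, A a l) * ‖GG d q A z l x‖ := by
        refine Finset.sum_le_sum fun l _ => mul_le_mul_of_nonneg_right ?_ (norm_nonneg _)
        rw [hA.colsum]; exact nw_le hA _ _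
    _ = ∑ a, ∑ l, A a l * ‖GG d q A z l x‖ := by
        simp only [Finset.sum_mul]; exact Finset.sum_comm
    _ ≤ ∑ l : Fin N, (d * κ : ℝ) := Finset.sum_le_sum fun a _ => hk a x
    _ = _ := by simp; ring

theorem ws_kj (i : Fin N) :
    WS A i (fun _ j k => ‖GG d q A z k j‖) ≤ N * d * κ := by
  unfold WS
  calc _ ≤ ∑ l : Fin N, (d * κ : ℝ) := by
        refine Finset.sum_le_sum fun l _ => ?_
        have h1 : ∀ j, ∑ k, ww A i l j k * ‖GG d q A z k j‖ ≤ aw A i l j / nw A i l * (d * κ) := by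
          intro j
          have : ∀ k, ww A i l j k * ‖GG d q A z k j‖ =
              aw A i l j / nw A i l * (aw A l i k * ‖GG d q A z k j‖) := by
            intro k; unfold ww; ring
          simp only [this, ← Finset.mul_sum]
          refine mul_le_mul_of_nonneg_left ?_ (div_nonneg (aw_nn hA _ _ _) (nw_nn hA _ _))
          refine le_trans ?_ (hk l j)
          exact Finset.sum_le_sum fun k _ => mul_le_mul_of_nonneg_right (aw_le hA _ _ _) (norm_nonneg _)
        refine (Finset.sum_le_sum fun j _ => h1 j).trans ?_
        rw [← Finset.sum_mul, ← Finset.sum_div]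
        change nw A i l / nw A i l * _ ≤ _
        have h0 : (0 : ℝ) ≤ d * κ := (Finset.sum_nonneg fun k _ =>
          mul_nonneg (hA.nn _ _) (norm_nonneg _)).trans (hk l l)
        have := div_self_le_one (nw A i l)
        nlinarith
    _ = _ := by simp; ring
end ws

/-- main self-consistent computation -/
theorem main_ws (hN : 0 < N) (hA : IsAdjMat N d A) (hz : 0 < z.im) (hq : 0 < q)
    (hq2 : q ^ 2 = d * (N - d) / N) {Γ κ : ℝ} (hΓq : 16 * Γ ≤ q)
    (hΓ : ∀ a b, ‖GG d q A z a b‖ ≤ Γ)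
    (hk : ∀ l x, ∑ k, A l k * ‖GG d q A z k x‖ ≤ d * κ) (i x : Fin N)
    (hm : ‖∑ k, (A i k : ℂ) * GG d q A z k k - d * mb d q A z‖ ≤ d * κ) (c : ℂ) (hc : ‖c‖ = 1) :
    |WS A i (fun l j k => phiM d q z c x A k - phiM d q z c x (swi A i l j k) k) -
      N * (q * (c * (mb d q A z * GG d q A z i x)).re)| ≤
      q⁻¹ * d * (N * (13 * Γ * κ + 32 * Γ ^ 3 / q) + Γ ^ 2 + d * Γ * κ) := by
  have hN' : (0 : ℝ) < N := by exact_mod_cast hN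
  have hΓ0 : 0 ≤ Γ := (norm_nonneg _).trans (hΓ i i)
  set G := GG d q A z with hG
  -- main term
  have hmain : WS A i (fun l _ k => q⁻¹ * (c * (G k k * G i x)).re) =
      q⁻¹ * d * (c * (G i x * (N * mb d q A z - G i i - ∑ k, (A i k : ℂ) * G k k))).re := by
    rw [WS_k hA i (fun l k => q⁻¹ * (c * (G k k * G i x)).re), Finset.sum_comm]
    have e1 : ∀ k, ∑ l, aw A l i k * (q⁻¹ * (c * (G k k * G i x)).re) =
        (d - (if k = i then (d : ℝ) else 0) - d * A i k) * (q⁻¹ * (c * (G k k * G i x)).re) := by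
      intro k
      rw [← Finset.sum_mul]
      congr 1
      simp only [aw_eq hA, Finset.sum_sub_distrib, ← Finset.sum_mul, hA.colsum]
      split_ifs with h
      · simp [hA.colsum]
      · simp
    simp only [e1]
    have e2 : ∀ k, (d - (if k = i then (d : ℝ) else 0) - d * A i k) * (q⁻¹ * (c * (G k k * G i x)).re)
        = q⁻¹ * d * (c * (G i x * (G k k - (if k = i then G k k else 0) - (A i k : ℂ) * G k k))).re := by
      intro k
      have : c * (G i x * (G k k - (if k = i then G k k else 0) - (A i k : ℂ) * G k k)) =
          ((1 - (if k = i then (1:ℝ) else 0) - A i k : ℝ) : ℂ) * (c * (G k k * G i x)) := by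
        push_cast
        split_ifs <;> simp <;> ring
      rw [this, Complex.re_ofReal_mul]
      split_ifs <;> ring
    simp only [e2]
    rw [← Finset.mul_sum, ← Complex.re_sum, ← Finset.mul_sum, ← Finset.mul_sum]
    simp only [Finset.sum_sub_distrib]
    congr 6
    · unfold mb
      have : (N : ℂ) ≠ 0 := by exact_mod_cast hN.ne'
      rw [← hG]; field_simp
    · simp
  have herr : |WS A i (fun l j k => phiM d q z c x A k - phiM d q z c x (swi A i l j k) k) -
      WS A i (fun l _ k => q⁻¹ * (c * (G k k * G i x)).re)| ≤
      q⁻¹ * d * (N * (13 * Γ * κ + 32 * Γ ^ 3 / q)) := by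
    rw [← WS_sub]
    refine (WS_abs hA i _).trans ?_
    have hp : ∀ l j k, ww A i l j k ≠ 0 →
        |phiM d q z c x A k - phiM d q z c x (swi A i l j k) k - q⁻¹ * (c * (G k k * G i x)).re| ≤
        q⁻¹ * (4 * Γ * ‖G k i‖ + 4 * Γ * ‖G k l‖ + 4 * Γ * ‖G k j‖ + Γ * ‖G l x‖ + 32 * Γ ^ 3 / q) := by
      intro l j k hw
      have hA' := swi_adj hA hw
      obtain ⟨p1, p2⟩ := pert hN hA hz hA' hq hΓq hΓ
      have hD := G_diff (q := q) hN hA hz hA' k x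
      rw [← hG] at hD p2
      set G' := GG d q (swi A i l j k) z with hG'
      have e : phiM d q z c x A k - phiM d q z c x (swi A i l j k) k - q⁻¹ * (c * (G k k * G i x)).re
          = q⁻¹ * (c * ((G k i - G k l) * (G' k x - G' j x) + (G k k * (G' i x - G i x) -
            G k k * G' l x - G k j * (G' i x - G' l x)))).re := by
        unfold phiM
        rw [← Complex.sub_re, ← mul_sub, ← hG, ← hG', hD, ← Complex.re_ofReal_mul,
          ← Complex.re_ofReal_mul, ← Complex.sub_re]
        congr 1
        push_cast; ring
      rw [e, abs_mul, abs_of_pos (inv_pos.2 hq)]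
      refine mul_le_mul_of_nonneg_left ((re_le _ _ hc).trans ?_) (by positivity)
      have a1 : ‖G k i - G k l‖ ≤ ‖G k i‖ + ‖G k l‖ := norm_sub_le _ _
      have a2 : ‖G' k x - G' j x‖ ≤ 4 * Γ := (norm_sub_le _ _).trans (by linarith [p1 k x, p1 j x])
      have a3 : ‖G' i x - G' l x‖ ≤ 4 * Γ := (norm_sub_le _ _).trans (by linarith [p1 i x, p1 l x])
      have a4 : ‖G' i x - G i x‖ ≤ 16 * Γ ^ 2 / q := by rw [norm_sub_rev]; exact p2 i x
      have a5 : ‖G' l x‖ ≤ ‖G l x‖ + 16 * Γ ^ 2 / q := by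
        have := norm_sub_norm_le (G' l x) (G l x)
        rw [norm_sub_rev] at this
        linarith [p2 l x]
      calc _ ≤ ‖G k i - G k l‖ * ‖G' k x - G' j x‖ + (‖G k k‖ * ‖G' i x - G i x‖ +
            ‖G k k‖ * ‖G' l x‖ + ‖G k j‖ * ‖G' i x - G' l x‖) := by
            simp only [← norm_mul]
            refine (norm_add_le _ _).trans ?_
            gcongr
            refine (norm_sub_le _ _).trans ?_
            gcongr
            exact norm_sub_le _ _
        _ ≤ (‖G k i‖ + ‖G k l‖) * (4 * Γ) + (Γ * (16 * Γ ^ 2 / q) +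
            Γ * (‖G l x‖ + 16 * Γ ^ 2 / q) + ‖G k j‖ * (4 * Γ)) := by
            gcongr
            · exact hΓ k k
            · exact hΓ k k
        _ = _ := by ring
    refine (WS_mono hA i hp).trans ?_
    simp only [WS_smul, WS_add]
    have b1 := ws_k hA hk i (fun _ => i)
    have b2 := ws_k hA hk i (fun l => l)
    have b3 := ws_kj hA hk i
    have b4 := ws_l hA hk i x
    have b5 := WS_const hA i (c := 32 * Γ ^ 3 / q) (by positivity)
    rw [← hG] at b1 b2 b3 b4
    calc _ ≤ q⁻¹ * (4 * Γ * (N * d * κ) + 4 * Γ * (N * d * κ) + 4 * Γ * (N * d * κ) +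
          Γ * (N * d * κ) + N * d * (32 * Γ ^ 3 / q)) := by gcongr
      _ = _ := by ring
  have hfin : |q⁻¹ * d * (c * (G i x * (N * mb d q A z - G i i - ∑ k, (A i k : ℂ) * G k k))).re -
      N * (q * (c * (mb d q A z * G i x)).re)| ≤ q⁻¹ * d * (Γ ^ 2 + d * Γ * κ) := by
    have e0 : N * q = q⁻¹ * d * (N - d) := by
      field_simp; rw [hq2]; field_simp
    have e : q⁻¹ * d * (c * (G i x * (N * mb d q A z - G i i - ∑ k, (A i k : ℂ) * G k k))).re -
      N * (q * (c * (mb d q A z * G i x)).re) = q⁻¹ * d * (c * (G i x * (- G i i -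
        (∑ k, (A i k : ℂ) * G k k - d * mb d q A z)))).re := by
      rw [← mul_assoc (N : ℝ) q, e0, mul_assoc _ ((N : ℝ) - d), ← mul_sub]
      congr 1
      rw [← Complex.re_ofReal_mul, ← Complex.sub_re]
      congr 1
      push_cast; ring
    rw [e, abs_mul, abs_of_nonneg (by positivity)]
    refine mul_le_mul_of_nonneg_left ((re_le _ _ hc).trans ?_) (by positivity)
    rw [norm_mul]
    calc _ ≤ Γ * (Γ + d * κ) := by
          gcongr
          · exact hΓ i x
          · refine (norm_sub_le _ _).trans ?_
            rw [norm_neg]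
            exact add_le_add (hΓ i i) hm
      _ = _ := by ring
  rw [hmain] at herr
  calc _ ≤ _ := abs_sub_le _ _ _
    _ ≤ _ := add_le_add herr hfin
    _ = _ := by ring

theorem main_good (hN : 0 < N) (hA : IsAdjMat N d A) (hz : 0 < z.im) (hq : 0 < q)
    (hq2 : q ^ 2 = d * (N - d) / N) {K κ : ℝ} (hK1 : 1 ≤ K) (hKq : 16 * K ≤ q)
    (hK : ∀ a b, (1 + ‖z‖) * ‖GG d q A z a b‖ ≤ K)
    (hk : ∀ l x, ∑ k, A l k * ‖GG d q A z k x‖ ≤ d * κ) (i x : Fin N)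
    (hm : ‖∑ k, (A i k : ℂ) * GG d q A z k k - d * mb d q A z‖ ≤ d * κ) (c : ℂ) (hc : ‖c‖ = 1) :
    vop (phiM d q z c x) i (gM d q z c i x) A ≤
      N * (64 * K ^ 3 * (2 * d * κ + d * (16 * K ^ 2 / q))) ∧
    |Sop (phiM d q z c x) i A - N * gM d q z c i x A| ≤
      2 * d * K + q⁻¹ * d * (N * (13 * K * κ + 32 * K ^ 3 / q) + K ^ 2 + d * K * κ) := by
  have hN' : (0 : ℝ) < N := by exact_mod_cast hN
  have hz0 : 0 ≤ ‖z‖ := norm_nonneg z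
  have hΓ : ∀ a b, ‖GG d q A z a b‖ ≤ K := fun a b => by
    have := hK a b
    have := norm_nonneg (GG d q A z a b)
    nlinarith
  have hΓ1 : ∀ a b, ‖GG d q A z a b‖ ≤ K / (1 + ‖z‖) := fun a b => by
    rw [le_div_iff₀ (by positivity), mul_comm]; exact hK a b
  have hK1' : K / (1 + ‖z‖) ≤ K := div_le_self (by linarith) (by linarith)
  constructor
  · have hp : ∀ l j k, ww A i l j k ≠ 0 →
        |phiM d q z c x A j - phiM d q z c x (swi A i l j k) k| *
          |gM d q z c i x A - gM d q z c i x (swi A i l j k)| ≤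
        64 * K ^ 3 * (‖GG d q A z j x‖ + ‖GG d q A z k x‖ + 16 * K ^ 2 / q) := by
      intro l j k hw
      have hA' := swi_adj hA hw
      obtain ⟨p1, p2⟩ := pert hN hA hz hA' hq hKq hΓ
      obtain ⟨-, r2⟩ := pert hN hA hz hA' hq (by linarith) hΓ1
      have m1 := mb_le hN hΓ
      have m1' := mb_le hN p1
      have m2 := mb_sub_le hN p2
      set G := GG d q A z with hG
      set G' := GG d q (swi A i l j k) z with hG'
      set m := mb d q A z
      set m' := mb d q (swi A i l j k) z
      rw [mul_comm]
      refine mul_le_mul ?_ ?_ (abs_nonneg _) (by positivity)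
      · have e : gM d q z c i x A - gM d q z c i x (swi A i l j k) =
            q * (c * (z * (G i x - G' i x) + ((m - m') * G i x + m' * (G i x - G' i x)))).re := by
          unfold gM
          rw [← mul_sub, ← Complex.sub_re]
          congr 2; ring
        rw [e, abs_mul, abs_of_pos hq]
        have t1 : ‖z‖ * ‖G i x - G' i x‖ ≤ 16 * K ^ 2 / q := by
          calc _ ≤ (1 + ‖z‖) * (16 * (K / (1 + ‖z‖)) ^ 2 / q) := by
                gcongr
                · linarith
                · exact r2 i x
            _ = 16 * (K / (1 + ‖z‖)) * K / q := by field_simp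
            _ ≤ 16 * K * K / q := by gcongr
            _ = _ := by ring
        have t2 : ‖z * (G i x - G' i x) + ((m - m') * G i x + m' * (G i x - G' i x))‖ ≤
            16 * K ^ 2 / q + (16 * K ^ 2 / q * K + 2 * K * (16 * K ^ 2 / q)) := by
          refine (norm_add_le _ _).trans (add_le_add ?_ ((norm_add_le _ _).trans (add_le_add ?_ ?_)))
          · rw [norm_mul]; exact t1
          · rw [norm_mul]; exact mul_le_mul m2 (hΓ _ _) (norm_nonneg _) (by positivity)
          · rw [norm_mul]; exact mul_le_mul m1' (p2 _ _) (norm_nonneg _) (by positivity)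
        calc _ ≤ q * (16 * K ^ 2 / q + (16 * K ^ 2 / q * K + 2 * K * (16 * K ^ 2 / q))) :=
              mul_le_mul_of_nonneg_left ((re_le _ _ hc).trans t2) hq.le
          _ = 16 * K ^ 2 + 48 * K ^ 3 := by field_simp; ring
          _ ≤ _ := by nlinarith [sq_nonneg K]
      · unfold phiM
        rw [← Complex.sub_re, ← mul_sub]
        refine (re_le _ _ hc).trans ?_
        calc ‖G j x - G' k x‖ = ‖G j x - G k x + (G k x - G' k x)‖ := by ring_nf
          _ ≤ ‖G j x - G k x‖ + ‖G k x - G' k x‖ := norm_add_le _ _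
          _ ≤ _ := add_le_add (norm_sub_le _ _) (p2 k x)
    have h4 := WS_mono hA i hp
    simp only [WS_smul, WS_add] at h4
    have b1 := ws_k hA hk i (fun _ => x)
    have b2 := ws_j hA hk i x
    have b5 := WS_const hA i (c := 16 * K ^ 2 / q) (by positivity)
    unfold vop
    refine h4.trans ?_
    calc _ ≤ 64 * K ^ 3 * (N * d * κ + N * d * κ + N * d * (16 * K ^ 2 / q)) := by gcongr
      _ = _ := by ring
  · have hw := main_ws hN hA hz hq hq2 hKq hΓ hk i x hm c hc
    have e : Sop (phiM d q z c x) i A - N * gM d q z c i x A =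
      - (∑ j, A i j * phiM d q z c x A j) + d * phiM d q z c x A i +
      (WS A i (fun l j k => phiM d q z c x A k - phiM d q z c x (swi A i l j k) k) -
      N * (q * (c * (mb d q A z * GG d q A z i x)).re)) := by
      rw [Sop_eq hA, phiM_sum hN hA hz, gM_eq hq hA hz]; ring
    have hφ : ∀ j, |phiM d q z c x A j| ≤ K := fun j => (re_le _ _ hc).trans (hΓ j x)
    have b1 := Asum_abs_le hA i hφ
    have b3 : |d * phiM d q z c x A i| ≤ d * K := by
      rw [abs_mul, abs_of_nonneg (by positivity)]; exact mul_le_mul_of_nonneg_left (hφ i) (by positivity)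
    rw [e]
    refine (abs_add_le _ _).trans (add_le_add ((abs_add_le _ _).trans ?_) hw)
    rw [abs_neg]; linarith

/-- crude bounds -/
theorem main_crude (hN : 8 ≤ N) (hA : IsAdjMat N d A) (hz : 0 < z.im) (hzN : 1 ≤ N * z.im)
    (hq : 0 < q) (hqN : q ≤ N) (hdN : d ≤ N) (i x : Fin N) (c : ℂ) (hc : ‖c‖ = 1) :
    vop (phiM d q z c x) i (gM d q z c i x) A ≤ N * ((N : ℝ) ^ 6) ^ 2 ∧
    |Sop (phiM d q z c x) i A - N * gM d q z c i x A| ≤ N * (N : ℝ) ^ 6 := by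
  have hN' : (8 : ℝ) ≤ N := by exact_mod_cast hN
  have hdN' : (d : ℝ) ≤ N := by exact_mod_cast hdN
  have hd0 : (0 : ℝ) ≤ d := by positivity
  have hN0 : 0 < N := by omega
  have hG : ∀ A : Matrix (Fin N) (Fin N) ℝ, IsAdjMat N d A → ∀ a b, ‖GG d q A z a b‖ ≤ N := by
    intro A hA a b
    refine (G_le_inv hN0 hA hz a b).trans ?_
    rw [div_le_iff₀ hz]; linarith
  have hφ : ∀ A : Matrix (Fin N) (Fin N) ℝ, IsAdjMat N d A → ∀ j, |phiM d q z c x A j| ≤ N :=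
    fun A hA j => (re_le _ _ hc).trans (hG A hA j x)
  have hg : ∀ A : Matrix (Fin N) (Fin N) ℝ, IsAdjMat N d A → |gM d q z c i x A| ≤ 2 * (N : ℝ) ^ 3 := by
    intro A hA
    rw [gM_eq hq hA hz]
    have b1 := Asum_abs_le hA i (hφ A hA)
    have b2 : |q * (c * (mb d q A z * GG d q A z i x)).re| ≤ N * (N * N) := by
      rw [abs_mul, abs_of_pos hq]
      refine mul_le_mul hqN ((re_le _ _ hc).trans ?_) (abs_nonneg _) (by positivity)
      rw [norm_mul]
      exact mul_le_mul (mb_le hN0 (hG A hA)) (hG A hA _ _) (norm_nonneg _) (by positivity)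
    refine (abs_add_le _ _).trans ?_
    have : (d : ℝ) * N ≤ N * N := by gcongr
    nlinarith [mul_nonneg (by linarith : (0:ℝ) ≤ N) (by linarith : (0:ℝ) ≤ N)]
  constructor
  · have hp : ∀ l j k, ww A i l j k ≠ 0 →
        |phiM d q z c x A j - phiM d q z c x (swi A i l j k) k| *
          |gM d q z c i x A - gM d q z c i x (swi A i l j k)| ≤ (2 * N) * (4 * (N : ℝ) ^ 3) := by
      intro l j k hw
      have hA' := swi_adj hA hw
      refine mul_le_mul ((abs_sub _ _).trans ?_) ((abs_sub _ _).trans ?_) (abs_nonneg _) (by positivity)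
      · linarith [hφ A hA j, hφ _ hA' k]
      · linarith [hg A hA, hg _ hA']
    have h4 := (WS_mono hA i hp).trans (WS_const hA i (by positivity))
    unfold vop
    refine h4.trans ?_
    calc _ ≤ (N : ℝ) * N * (2 * N * (4 * (N : ℝ) ^ 3)) := by gcongr
      _ = 8 * (N : ℝ) ^ 6 := by ring
      _ ≤ (N : ℝ) ^ 7 * (N : ℝ) ^ 6 := by
        gcongr
        have : (1 : ℝ) ≤ (N : ℝ) ^ 6 := one_le_pow₀ (by linarith)
        calc (8 : ℝ) ≤ N * 1 := by linarith
          _ ≤ N * (N : ℝ) ^ 6 := by gcongr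
          _ = _ := by ring
      _ = _ := by ring
  · have hs : |Sop (phiM d q z c x) i A| ≤ N * d * (2 * N) := by
      refine (WS_abs hA i _).trans ((WS_mono hA i ?_).trans (WS_const hA i (by positivity)))
      intro l j k hw
      exact (abs_sub _ _).trans (by linarith [hφ A hA j, hφ _ (swi_adj hA hw) k])
    refine (abs_sub _ _).trans ?_
    rw [abs_mul, abs_of_nonneg (by positivity : (0:ℝ) ≤ N)]
    calc _ ≤ N * (N : ℝ) * (2 * N) + N * (2 * (N : ℝ) ^ 3) := by
          refine add_le_add (hs.trans (by gcongr)) (by gcongr; exact hg A hA)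
      _ = N * (2 * (N : ℝ) ^ 2 + 2 * (N : ℝ) ^ 3) := by ring
      _ ≤ N * (N : ℝ) ^ 6 := by
        gcongr
        have h2 : (N : ℝ) ^ 2 ≤ (N : ℝ) ^ 5 := pow_le_pow_right₀ (by linarith) (by norm_num)
        have h3 : (N : ℝ) ^ 3 ≤ (N : ℝ) ^ 5 := pow_le_pow_right₀ (by linarith) (by norm_num)
        have h5 : (0 : ℝ) ≤ (N : ℝ) ^ 5 := by positivity
        nlinarith
end main

open Classical in
/-- number of graphs violating `P` -/
def Fl (N d : ℕ) (P : Matrix (Fin N) (Fin N) ℝ → Prop) : ℝ :=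
  (((Gr N d).filter (fun A => ¬ P A)).card : ℝ)

def Cm (m : ℕ) : ℝ := 2 * ((4 * (2 * m + 1)) ^ (m + 1) + 4 ^ (2 * m + 2))

theorem Fl_nn (N d : ℕ) (P : Matrix (Fin N) (Fin N) ℝ → Prop) : 0 ≤ Fl N d P := by
  unfold Fl; positivity

theorem Cm_pos (m : ℕ) : 0 < Cm m := by unfold Cm; positivity

open Classical in
theorem conc' {N d : ℕ} (hN : 0 < N) (φ : Matrix (Fin N) (Fin N) ℝ → Fin N → ℝ) (i : Fin N)
    (g : Matrix (Fin N) (Fin N) ℝ → ℝ) (m : ℕ) (Q : Matrix (Fin N) (Fin N) ℝ → Prop)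
    (β L U : ℝ) (hβ : 1 ≤ β) (hL : 0 ≤ L) (hU : 0 < U)
    (hQ : ∀ A, IsAdjMat N d A → Q A → vop φ i g A ≤ N * β ^ 2 ∧ |Sop φ i A - N * g A| ≤ N * β)
    (hall : ∀ A, IsAdjMat N d A → vop φ i g A ≤ N * L ^ 2 ∧ |Sop φ i A - N * g A| ≤ N * L) :
    U ^ (2 * m + 2) * Fl N d (fun A => |g A| ≤ β * U) ≤
      Cm m * ((Gr N d).card + L ^ (2 * m + 2) * Fl N d Q) := by
  have h := conc_stein hN φ i g m Q β L (β * U) (by linarith) hL (by positivity) hQ hall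
  have hb : (1 : ℝ) ≤ β ^ (2 * m + 2) := one_le_pow₀ hβ
  have e : Fl N d (fun A => |g A| ≤ β * U) =
      (((Gr N d).filter (fun A => β * U < |g A|)).card : ℝ) := by
    unfold Fl; simp only [not_le]
  have e2 : (((Gr N d).filter (fun A => ¬ Q A)).card : ℝ) = Fl N d Q := rfl
  rw [e]
  rw [e2] at h
  set F := (((Gr N d).filter (fun A => β * U < |g A|)).card : ℝ)
  have hF := Fl_nn N d Q
  have hC := Cm_pos m
  change _ ≤ Cm m * _ at h
  rw [mul_pow] at h
  have hb0 : 0 < β ^ (2 * m + 2) := by linarith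
  refine le_of_mul_le_mul_left ?_ hb0
  calc _ = β ^ (2 * m + 2) * U ^ (2 * m + 2) * F := by ring
    _ ≤ _ := h
    _ ≤ Cm m * (β ^ (2 * m + 2) * (Gr N d).card + β ^ (2 * m + 2) * (L ^ (2 * m + 2) * Fl N d Q)) := by
      have := le_mul_of_one_le_left (by positivity : 0 ≤ L ^ (2 * m + 2) * Fl N d Q) hb
      exact mul_le_mul_of_nonneg_left (by linarith) hC.le
    _ = _ := by ring

structure Par (N d : ℕ) (U η : ℝ) : Prop where
  hU : 1000 ≤ U
  hd : U ^ 400 ≤ d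
  h2 : 2 * d ≤ N
  hη : U ^ 100 ≤ N * η

theorem upow {U : ℝ} (hU : 1000 ≤ U) (c : ℝ) (hc : c ≤ 1000) {a b : ℕ} (h : a < b) :
    c * U ^ a ≤ U ^ b := by
  have h1 : U ^ (a + 1) ≤ U ^ b := pow_le_pow_right₀ (by linarith) h
  have h0 : 0 < U ^ a := by positivity
  rw [pow_succ] at h1
  nlinarith

namespace Par
variable {N d : ℕ} {U η : ℝ} (h : Par N d U η)
include h

theorem U1 : 1 ≤ U := by linarith [h.hU]

theorem dpos : (1 : ℝ) ≤ d := (one_le_pow₀ h.U1).trans h.hd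

theorem h2' : 2 * (d : ℝ) ≤ N := by exact_mod_cast h.h2

theorem N8 : 8 ≤ N := by
  have h1 : (1000 : ℝ) ≤ d := by
    have := upow h.hU 1000 le_rfl (a := 0) (b := 400) (by norm_num)
    rw [pow_zero, mul_one] at this
    exact this.trans h.hd
  have h2 : 1000 ≤ d := by exact_mod_cast h1
  have := h.h2
  omega

theorem Npos : (0 : ℝ) < N := by linarith [h.dpos, h.h2']

theorem q2 : qval N d ^ 2 = d * (N - d) / N := by
  unfold qval
  rw [Real.sq_sqrt]
  have := h.Npos; have := h.h2'; have := h.dpos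
  exact div_nonneg (mul_nonneg (by linarith) (by linarith)) (by linarith)

theorem qpos : 0 < qval N d := by
  unfold qval
  rw [Real.sqrt_pos]
  have := h.Npos; have := h.h2'; have := h.dpos
  exact div_pos (mul_pos (by linarith) (by linarith)) (by linarith)

theorem d_le : (d : ℝ) ≤ 2 * qval N d ^ 2 := by
  have := h.Npos; have := h.h2'; have := h.dpos
  rw [h.q2]
  rw [← mul_div_assoc, le_div_iff₀ h.Npos]
  nlinarith

theorem q2_le : qval N d ^ 2 ≤ d := by
  have := h.Npos; have := h.h2'; have := h.dpos
  rw [h.q2, div_le_iff₀ h.Npos]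
  nlinarith

theorem q_big : U ^ 200 ≤ 2 * qval N d := by
  have h1 := h.d_le
  have h2 := h.hd
  have h3 := h.qpos
  refine (sq_le_sq₀ (by have := h.U1; positivity) (by positivity)).1 ?_
  have e : (U ^ 200) ^ 2 = U ^ 400 := by ring
  rw [e]
  nlinarith

theorem q_le_N : qval N d ≤ N := by
  have h1 := h.q2_le
  have := h.Npos; have := h.h2'; have := h.dpos
  have h3 := h.qpos
  by_contra hc
  push Not at hc
  nlinarith

theorem ηpos : 0 < η := by
  have h1 := h.hη
  have h2 : 0 < U ^ 100 := by have := h.U1; positivity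
  by_contra hc
  push Not at hc
  have := h.Npos
  nlinarith

theorem hη1 : 1 ≤ N * η := (one_le_pow₀ h.U1).trans h.hη

end Par

section events
variable {N : ℕ}

def Q1 (d : ℕ) (q : ℝ) (z : ℂ) (K : ℝ) (A : Matrix (Fin N) (Fin N) ℝ) : Prop :=
  ∀ a b, (1 + ‖z‖) * ‖GG d q A z a b‖ ≤ K

def sqφ (d : ℕ) (q : ℝ) (z : ℂ) (x : Fin N) (A : Matrix (Fin N) (Fin N) ℝ) (j : Fin N) : ℝ :=
  ‖GG d q A z j x‖ ^ 2

def dgφ (d : ℕ) (q : ℝ) (z c : ℂ) (A : Matrix (Fin N) (Fin N) ℝ) (j : Fin N) : ℝ :=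
  (c * GG d q A z j j).re

def NiceF (d : ℕ) (q : ℝ) (z : ℂ) (φ : Matrix (Fin N) (Fin N) ℝ → Fin N → ℝ) : Prop :=
  (∀ A K, 1 ≤ K → (∀ a b, ‖GG d q A z a b‖ ≤ K) → ∀ j, |φ A j| ≤ K ^ 2) ∧
  (∀ A A' K, 1 ≤ K → (∀ a b, ‖GG d q A z a b‖ ≤ K) → (∀ a b, ‖GG d q A' z a b‖ ≤ 2 * K) →
    (∀ a b, ‖GG d q A z a b - GG d q A' z a b‖ ≤ 16 * K ^ 2 / q) →
    ∀ j, |φ A j - φ A' j| ≤ 48 * K ^ 3 / q)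

theorem nice_sq (d : ℕ) {q : ℝ} (hq : 0 < q) (z : ℂ) (x : Fin N) : NiceF d q z (sqφ d q z x) := by
  constructor
  · intro A K hK h j
    unfold sqφ
    rw [abs_of_nonneg (by positivity)]
    have := h j x
    gcongr
  · intro A A' K hK h h' hd j
    unfold sqφ
    rw [sq_sub_sq, abs_mul, abs_of_nonneg (by positivity)]
    calc _ ≤ (3 * K) * (16 * K ^ 2 / q) := by
          refine mul_le_mul (by linarith [h j x, h' j x]) ((abs_norm_sub_norm_le _ _).trans (hd j x))
            (abs_nonneg _) (by positivity)
      _ = _ := by ring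

theorem nice_dg (d : ℕ) {q : ℝ} (hq : 0 < q) (z c : ℂ) (hc : ‖c‖ = 1) :
    NiceF (N := N) d q z (dgφ d q z c) := by
  constructor
  · intro A K hK h j
    unfold dgφ
    refine (re_le _ _ hc).trans ((h j j).trans ?_)
    nlinarith
  · intro A A' K hK h h' hd j
    unfold dgφ
    rw [← Complex.sub_re, ← mul_sub]
    refine (re_le _ _ hc).trans ((hd j j).trans ?_)
    have : K ^ 2 ≤ K ^ 3 := pow_le_pow_right₀ hK (by norm_num)
    refine div_le_div_of_nonneg_right ?_ hq.le
    nlinarith [sq_nonneg K]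

theorem Q1.le {d : ℕ} {q : ℝ} {z : ℂ} {K : ℝ} {A : Matrix (Fin N) (Fin N) ℝ} (h : Q1 d q z K A)
    (a b : Fin N) : ‖GG d q A z a b‖ ≤ K := by
  have := h a b
  have := norm_nonneg (GG d q A z a b)
  have := norm_nonneg z
  nlinarith

theorem L1conc {d : ℕ} {U E η : ℝ} (h : Par N d U η) (φ : Matrix (Fin N) (Fin N) ℝ → Fin N → ℝ)
    (hφ : NiceF d (qval N d) ⟨E, η⟩ φ) (i : Fin N) (m : ℕ) :
    U ^ (2 * m + 2) * Fl N d (fun A => |gL φ d i A| ≤ d / U ^ 80 * U) ≤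
      Cm m * ((Gr N d).card + ((N : ℝ) ^ 6) ^ (2 * m + 2) * Fl N d (Q1 d (qval N d) ⟨E, η⟩ (U ^ 5))) := by
  have hU := h.hU
  have hU1 := h.U1
  have hN8 := h.N8
  have hN : 0 < N := by omega
  have hN' : (8 : ℝ) ≤ N := by exact_mod_cast hN8
  have hz : 0 < (⟨E, η⟩ : ℂ).im := h.ηpos
  have hq := h.qpos
  have hd1 := h.dpos
  have h2 := h.h2'
  set q := qval N d with hqd
  have hUp : 0 < U := by linarith
  refine conc' hN φ i _ m _ (d / U ^ 80) _ U ?_ (by positivity) (by linarith) ?_ ?_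
  · rw [le_div_iff₀ (by positivity), one_mul]
    exact (pow_le_pow_right₀ hU1 (by norm_num)).trans h.hd
  · intro A hA hQ
    have hK1 : 1 ≤ U ^ 5 := one_le_pow₀ hU1
    have hKq : 16 * U ^ 5 ≤ q := by
      have := upow hU 32 (by norm_num) (a := 5) (b := 200) (by norm_num)
      have := h.q_big
      linarith
    have hB1 : 48 * (U ^ 5) ^ 3 / q ≤ 1 / U ^ 184 := by
      rw [div_le_div_iff₀ hq (by positivity)]
      have := upow hU 96 (by norm_num) (a := 199) (b := 200) (by norm_num)
      have h3 := h.q_big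
      calc _ = 48 * U ^ 199 := by ring
        _ ≤ _ := by linarith
    obtain ⟨v1, v2⟩ := L1det hN hA φ i (B := (U ^ 5) ^ 2) (B1 := 1 / U ^ 184) (hφ.1 A _ hK1 hQ.le)
      (fun l j k hw a => by
        obtain ⟨p1, p2⟩ := pert hN hA hz (swi_adj hA hw) hq hKq hQ.le
        exact (hφ.2 A _ _ hK1 hQ.le p1 p2 a).trans hB1) (by positivity)
    have e10 : (U ^ 5) ^ 2 = U ^ 10 := by ring
    rw [e10] at v1 v2
    have b0 : 1 / U ^ 184 ≤ 1 := by
      rw [div_le_one (by positivity)]; exact one_le_pow₀ hU1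
    have b1 : 1 ≤ U ^ 10 := one_le_pow₀ hU1
    constructor
    · refine v1.trans ?_
      refine mul_le_mul_of_nonneg_left ?_ (by positivity)
      have b2 : 8 * U ^ 10 ≤ d / U ^ 184 := by
        rw [le_div_iff₀ (by positivity)]
        have := upow hU 8 (by norm_num) (a := 194) (b := 400) (by norm_num)
        calc _ = 8 * U ^ 194 := by ring
          _ ≤ _ := this.trans h.hd
      calc (d : ℝ) * ((2 * U ^ 10 + 1 / U ^ 184) * (2 * d * (1 / U ^ 184) + 4 * U ^ 10 + 4 * (1 / U ^ 184)))
          ≤ d * ((3 * U ^ 10) * (3 * (d / U ^ 184))) := by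
            gcongr
            · linarith
            · have : 2 * (d : ℝ) * (1 / U ^ 184) = 2 * (d / U ^ 184) := by ring
              linarith
        _ = 9 * d ^ 2 / U ^ 174 := by field_simp; ring
        _ ≤ (d / U ^ 80) ^ 2 := by
          rw [div_pow, ← pow_mul, div_le_div_iff₀ (by positivity) (by positivity)]
          have := upow hU 9 (by norm_num) (a := 160) (b := 174) (by norm_num)
          calc _ = d ^ 2 * (9 * U ^ (80 * 2)) := by ring
            _ ≤ _ := by gcongr
    · refine v2.trans ?_
      refine mul_le_mul_of_nonneg_left ?_ (by positivity)
      have c1 : 2 * d * U ^ 10 / N ≤ d / U ^ 81 := by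
        rw [div_le_div_iff₀ (by linarith) (by positivity)]
        have := upow hU 2 (by norm_num) (a := 91) (b := 400) (by norm_num)
        calc _ = d * (2 * U ^ 91) := by ring
          _ ≤ d * N := by gcongr; linarith [h.hd]
      have c2 : d * (1 / U ^ 184) ≤ d / U ^ 81 := by
        rw [mul_one_div]; gcongr
        norm_num
      have c3 : d / U ^ 81 * 2 ≤ d / U ^ 80 := by
        rw [div_mul_eq_mul_div, div_le_div_iff₀ (by positivity) (by positivity)]
        have := upow hU 2 (by norm_num) (a := 80) (b := 81) (by norm_num)
        calc _ = d * (2 * U ^ 80) := by ring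
          _ ≤ _ := by gcongr
      linarith
  · intro A hA
    have hG : ∀ A : Matrix (Fin N) (Fin N) ℝ, IsAdjMat N d A → ∀ a b, ‖GG d q A ⟨E, η⟩ a b‖ ≤ N := by
      intro A hA a b
      refine (G_le_inv hN hA hz a b).trans ?_
      rw [div_le_iff₀ hz]; exact h.hη1
    have hφN : ∀ A : Matrix (Fin N) (Fin N) ℝ, IsAdjMat N d A → ∀ j, |φ A j| ≤ (N : ℝ) ^ 2 :=
      fun A hA => hφ.1 A N (by linarith) (hG A hA)
    obtain ⟨v1, v2⟩ := L1det hN hA φ i (B := (N : ℝ) ^ 2) (B1 := 2 * (N : ℝ) ^ 2) (hφN A hA)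
      (fun l j k hw a => (abs_sub _ _).trans
        (by linarith [hφN A hA a, hφN _ (swi_adj hA hw) a])) (by positivity)
    have hdN : (d : ℝ) ≤ N := by linarith
    constructor
    · refine v1.trans (mul_le_mul_of_nonneg_left ?_ (by positivity))
      calc _ ≤ (N : ℝ) * ((2 * (N : ℝ) ^ 2 + 2 * (N : ℝ) ^ 2) * (2 * N * (2 * (N : ℝ) ^ 2) +
            4 * (N : ℝ) ^ 2 + 4 * (2 * (N : ℝ) ^ 2))) := by gcongr
        _ = 16 * (N : ℝ) ^ 6 + 48 * (N : ℝ) ^ 5 := by ring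
        _ ≤ (N : ℝ) ^ 6 * (N : ℝ) ^ 6 := by
          have h5 : (N : ℝ) ^ 5 ≤ (N : ℝ) ^ 6 := pow_le_pow_right₀ (by linarith) (by norm_num)
          have h6 : (64 : ℝ) ≤ (N : ℝ) ^ 6 := by
            calc (64 : ℝ) ≤ (8 : ℝ) ^ 6 := by norm_num
              _ ≤ _ := by gcongr
          have h7 : 0 ≤ (N : ℝ) ^ 6 := by positivity
          nlinarith
        _ = _ := by ring
    · refine v2.trans (mul_le_mul_of_nonneg_left ?_ (by positivity))
      calc _ ≤ 2 * (N : ℝ) * (N : ℝ) ^ 2 / N + N * (2 * (N : ℝ) ^ 2) := by gcongr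
        _ = 2 * (N : ℝ) ^ 2 + 2 * (N : ℝ) ^ 3 := by field_simp
        _ ≤ _ := by
          have h2 : (N : ℝ) ^ 2 ≤ (N : ℝ) ^ 5 := pow_le_pow_right₀ (by linarith) (by norm_num)
          have h3 : (N : ℝ) ^ 3 ≤ (N : ℝ) ^ 5 := pow_le_pow_right₀ (by linarith) (by norm_num)
          have h5 : (0 : ℝ) ≤ (N : ℝ) ^ 5 := by positivity
          nlinarith

def Q2 (d : ℕ) (q : ℝ) (z : ℂ) (U : ℝ) (A : Matrix (Fin N) (Fin N) ℝ) : Prop :=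
  Q1 d q z (U ^ 5) A ∧ (∀ l x, |gL (sqφ d q z x) d l A| ≤ d / U ^ 80 * U) ∧
  (∀ l (_ : Fin N), |gL (dgφ d q z 1) d l A| ≤ d / U ^ 80 * U) ∧
  (∀ l (_ : Fin N), |gL (dgφ d q z (-Complex.I)) d l A| ≤ d / U ^ 80 * U)

theorem re_negI (w : ℂ) : (-Complex.I * w).re = w.im := by simp

theorem Q2_hk {d : ℕ} {U E η : ℝ} (h : Par N d U η) {A : Matrix (Fin N) (Fin N) ℝ}
    (hA : IsAdjMat N d A) (hQ : Q2 d (qval N d) ⟨E, η⟩ U A) :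
    (∀ l x, ∑ k, A l k * ‖GG d (qval N d) A ⟨E, η⟩ k x‖ ≤ d * (1 / U ^ 39)) ∧
    ∀ i, ‖∑ k, (A i k : ℂ) * GG d (qval N d) A ⟨E, η⟩ k k - d * mb d (qval N d) A ⟨E, η⟩‖ ≤
      d * (1 / U ^ 39) := by
  have hU := h.hU
  have hU1 := h.U1
  have hUp : 0 < U := by linarith
  have hN8 := h.N8
  have hN : 0 < N := by omega
  have hz : 0 < (⟨E, η⟩ : ℂ).im := h.ηpos
  have hη : 0 < η := h.ηpos
  have hNp := h.Npos
  obtain ⟨hQ1, hs, hd1, hd2⟩ := hQ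
  have e80 : (d : ℝ) / U ^ 80 * U = d / U ^ 79 := by field_simp
  set q := qval N d with hqd
  rw [e80] at hs hd1 hd2
  constructor
  · intro l x
    have h1 := (abs_le.1 (hs l x)).2
    unfold gL sqφ at h1
    rw [ward hN hA hz x] at h1
    have h2 : (GG d q A ⟨E, η⟩ x x).im / η ≤ U ^ 5 / η := by
      gcongr
      exact ((le_abs_self _).trans (Complex.abs_im_le_norm _)).trans (hQ1.le x x)
    have h3 : (d / N : ℝ) * ((GG d q A ⟨E, η⟩ x x).im / η) ≤ d / U ^ 79 := by
      calc _ ≤ (d / N : ℝ) * (U ^ 5 / η) := by gcongr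
        _ = d * (U ^ 5 / (N * η)) := by field_simp
        _ ≤ d * (U ^ 5 / U ^ 100) := by gcongr; exact h.hη
        _ = d / U ^ 95 := by field_simp
        _ ≤ _ := by
          gcongr
          norm_num
    have hcs : (∑ k, A l k * ‖GG d q A ⟨E, η⟩ k x‖) ^ 2 ≤ (d * (1 / U ^ 39)) ^ 2 := by
      have := Finset.sum_mul_sq_le_sq_mul_sq Finset.univ (fun k => A l k)
        (fun k => A l k * ‖GG d q A ⟨E, η⟩ k x‖)
      have e : ∀ k, A l k ^ 2 = A l k := fun k => by
        rcases hA.2.2.1 l k with h | h <;> simp [h]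
      simp only [mul_pow, ← mul_assoc, ← pow_two, e, hA.2.2.2] at this
      calc _ ≤ _ := this
        _ ≤ (d : ℝ) * (2 * (d / U ^ 79)) := by
          gcongr
          change _ - (d / N : ℝ) * ((GG d q A ⟨E, η⟩ x x).im / η) ≤ _ at h1
          linarith
        _ = d ^ 2 * 2 / U ^ 79 := by ring
        _ ≤ d ^ 2 / U ^ 78 := by
          rw [div_le_div_iff₀ (by positivity) (by positivity)]
          have := upow hU 2 (by norm_num) (a := 78) (b := 79) (by norm_num)
          calc _ = (d : ℝ) ^ 2 * (2 * U ^ 78) := by ring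
            _ ≤ _ := by gcongr
        _ = _ := by field_simp
    exact (sq_le_sq₀ (Finset.sum_nonneg fun k _ => mul_nonneg (hA.nn _ _) (norm_nonneg _))
      (by positivity)).1 hcs
  · intro i
    have key : ∀ c : ℂ, (c * (∑ k, (A i k : ℂ) * GG d q A ⟨E, η⟩ k k - d * mb d q A ⟨E, η⟩)).re =
        gL (dgφ d q ⟨E, η⟩ c) d i A := by
      intro c
      unfold gL dgφ mb
      rw [mul_sub, Complex.sub_re, Finset.mul_sum, Complex.re_sum]
      congr 1
      · refine Finset.sum_congr rfl fun j _ => ?_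
        rw [mul_left_comm, Complex.re_ofReal_mul]
      · rw [← Complex.re_sum, ← Finset.mul_sum, ← Complex.re_ofReal_mul]
        congr 1; push_cast; ring
    have k1 := hd1 i i
    have k2 := hd2 i i
    rw [← key] at k1 k2
    rw [one_mul] at k1
    rw [re_negI] at k2
    refine (Complex.norm_le_abs_re_add_abs_im _).trans ((add_le_add k1 k2).trans ?_)
    rw [← two_mul, mul_one_div, ← mul_div_assoc, div_le_div_iff₀ (by positivity) (by positivity)]
    have := upow hU 2 (by norm_num) (a := 39) (b := 79) (by norm_num)
    calc _ = (d : ℝ) * (2 * U ^ 39) := by ring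
      _ ≤ _ := by gcongr

theorem Mconc {d : ℕ} {U E η : ℝ} (h : Par N d U η) (i x : Fin N) (c : ℂ) (hc : ‖c‖ = 1) (m : ℕ) :
    U ^ (2 * m + 2) * Fl N d (fun A => |gM d (qval N d) ⟨E, η⟩ c i x A| ≤ qval N d / U ^ 9 * U) ≤
      Cm m * ((Gr N d).card + ((N : ℝ) ^ 6) ^ (2 * m + 2) * Fl N d (Q2 d (qval N d) ⟨E, η⟩ U)) := by
  have hU := h.hU
  have hU1 := h.U1
  have hN8 := h.N8
  have hN : 0 < N := by omega
  have hN' : (8 : ℝ) ≤ N := by exact_mod_cast hN8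
  have hz : 0 < (⟨E, η⟩ : ℂ).im := h.ηpos
  have hq := h.qpos
  have hd1 := h.dpos
  have h2 := h.h2'
  have hqb := h.q_big
  have hqN := h.q_le_N
  have hq2 := h.q2
  have hdq := h.d_le
  have hqd' := h.q2_le
  have hhk := fun A hA hQ => Q2_hk (E := E) h (A := A) hA hQ
  set q := qval N d with hqd
  have hUp : 0 < U := by linarith
  refine conc' hN (phiM d q ⟨E, η⟩ c x) i _ m _ (q / U ^ 9) _ U ?_ (by positivity) (by linarith) ?_ ?_
  · rw [le_div_iff₀ (by positivity), one_mul]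
    have := upow hU 2 (by norm_num) (a := 9) (b := 200) (by norm_num)
    linarith
  · intro A hA hQ
    have hK1 : 1 ≤ U ^ 5 := one_le_pow₀ hU1
    have hKq : 16 * U ^ 5 ≤ q := by
      have := upow hU 32 (by norm_num) (a := 5) (b := 200) (by norm_num)
      linarith
    obtain ⟨hk, hm⟩ := hhk A hA hQ
    obtain ⟨v1, v2⟩ := main_good hN hA hz hq hq2 hK1 hKq hQ.1 hk i x (hm i) c hc
    have hiq : 1 / q ≤ 2 / U ^ 200 := by
      rw [div_le_div_iff₀ hq (by positivity)]; linarith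
    constructor
    · refine v1.trans (mul_le_mul_of_nonneg_left ?_ (by positivity))
      have b1 : 16 * (U ^ 5) ^ 2 / q ≤ 1 / U ^ 39 := by
        rw [div_le_div_iff₀ hq (by positivity)]
        have := upow hU 32 (by norm_num) (a := 49) (b := 200) (by norm_num)
        calc _ = 16 * U ^ 49 := by ring
          _ ≤ _ := by linarith
      calc _ ≤ 64 * (U ^ 5) ^ 3 * (2 * (2 * q ^ 2) * (1 / U ^ 39) + (2 * q ^ 2) * (1 / U ^ 39)) := by
            gcongr
        _ = 384 * q ^ 2 / U ^ 24 := by field_simp; ring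
        _ ≤ (q / U ^ 9) ^ 2 := by
          rw [div_pow, ← pow_mul, div_le_div_iff₀ (by positivity) (by positivity)]
          have := upow hU 384 (by norm_num) (a := 18) (b := 24) (by norm_num)
          calc _ = q ^ 2 * (384 * U ^ (9 * 2)) := by ring
            _ ≤ _ := by gcongr
    · refine v2.trans ?_
      have hdN : (d : ℝ) ≤ N := by linarith
      have b1 : 32 * (U ^ 5) ^ 3 / q ≤ 1 / U ^ 34 := by
        rw [div_le_div_iff₀ hq (by positivity)]
        have := upow hU 64 (by norm_num) (a := 49) (b := 200) (by norm_num)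
        calc _ = 32 * U ^ 49 := by ring
          _ ≤ _ := by linarith
      have b2 : (U ^ 5) ^ 2 ≤ N * (1 / U ^ 34) := by
        rw [mul_one_div, le_div_iff₀ (by positivity)]
        have := upow hU 1 (by norm_num) (a := 44) (b := 400) (by norm_num)
        calc _ = 1 * U ^ 44 := by ring
          _ ≤ _ := by linarith [h.hd]
      have b3 : q⁻¹ * d ≤ 2 * q := by
        rw [inv_mul_le_iff₀ hq]; linarith
      have b4 : 2 * d * U ^ 5 ≤ N * (q / U ^ 10) := by
        have : 4 * (q * U ^ 15) ≤ N := by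
          have h1 := upow hU 8 (by norm_num) (a := 15) (b := 200) (by norm_num)
          have : 4 * U ^ 15 ≤ q := by linarith
          calc _ = q * (4 * U ^ 15) := by ring
            _ ≤ q * q := by gcongr
            _ ≤ _ := by nlinarith
        rw [← mul_div_assoc, le_div_iff₀ (by positivity)]
        calc _ ≤ 2 * (2 * q ^ 2) * U ^ 5 * U ^ 10 := by gcongr
          _ = (4 * (q * U ^ 15)) * q := by ring
          _ ≤ N * q := by gcongr
      have e34 : U ^ 5 * (1 / U ^ 39) = 1 / U ^ 34 := by field_simp
      calc _ ≤ N * (q / U ^ 10) + 2 * q * (N * (13 * (1 / U ^ 34) + 1 / U ^ 34) +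
            N * (1 / U ^ 34) + N * (1 / U ^ 34)) := by
            rw [mul_assoc 13, mul_assoc (d : ℝ), e34]
            gcongr
        _ = N * (q / U ^ 10 + 32 * q / U ^ 34) := by ring
        _ ≤ N * (q / U ^ 9) := by
          gcongr
          have c1 : 32 * q / U ^ 34 ≤ q / U ^ 10 := by
            rw [div_le_div_iff₀ (by positivity) (by positivity)]
            have := upow hU 32 (by norm_num) (a := 10) (b := 34) (by norm_num)
            calc _ = q * (32 * U ^ 10) := by ring
              _ ≤ _ := by gcongr
          have c2 : 2 * (q / U ^ 10) ≤ q / U ^ 9 := by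
            rw [← mul_div_assoc, div_le_div_iff₀ (by positivity) (by positivity)]
            have := upow hU 2 (by norm_num) (a := 9) (b := 10) (by norm_num)
            calc _ = q * (2 * U ^ 9) := by ring
              _ ≤ _ := by gcongr
          linarith
  · intro A hA
    exact main_crude hN8 hA hz h.hη1 hq hqN (by have := h.h2; omega) i x c hc

def Q3 (d : ℕ) (q : ℝ) (z : ℂ) (U : ℝ) (A : Matrix (Fin N) (Fin N) ℝ) : Prop :=
  (∀ i x, |gM d q z 1 i x A| ≤ q / U ^ 9 * U) ∧
  (∀ i x, |gM d q z (-Complex.I) i x A| ≤ q / U ^ 9 * U)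

theorem Q3_sc {d : ℕ} {U E η : ℝ} (h : Par N d U η) {A : Matrix (Fin N) (Fin N) ℝ}
    (hQ : Q3 d (qval N d) ⟨E, η⟩ U A) (i x : Fin N) :
    ‖(⟨E, η⟩ + mb d (qval N d) A ⟨E, η⟩) * GG d (qval N d) A ⟨E, η⟩ i x +
      (if i = x then 1 else 0)‖ ≤ 1 / 4 := by
  have hU := h.hU
  have hU1 := h.U1
  have hUp : 0 < U := by linarith
  have hq := h.qpos
  have hN' := h.Npos
  have k1 := hQ.1 i x
  have k2 := hQ.2 i x
  unfold gM at k1 k2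
  set q := qval N d
  have e : q / U ^ 9 * U = q * (1 / U ^ 8) := by field_simp
  rw [e, abs_mul, abs_of_pos hq] at k1 k2
  have k1' := le_of_mul_le_mul_left k1 hq
  have k2' := le_of_mul_le_mul_left k2 hq
  rw [one_mul] at k1'
  rw [re_negI] at k2'
  set w := (⟨E, η⟩ + mb d q A ⟨E, η⟩) * GG d q A ⟨E, η⟩ i x + (if i = x then 1 else 0)
  have h8 : 1 / U ^ 8 ≤ 1 / 1000 := by
    have := upow hU 1000 le_rfl (a := 0) (b := 8) (by norm_num)
    exact one_div_le_one_div_of_le (by norm_num) (by simpa using this)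
  have h9 : ‖(N : ℂ)⁻¹‖ ≤ 1 / 8 := by
    rw [norm_inv, Complex.norm_natCast, ← one_div]
    exact one_div_le_one_div_of_le (by norm_num) (by exact_mod_cast h.N8)
  have h10 := Complex.norm_le_abs_re_add_abs_im (w - (N : ℂ)⁻¹)
  calc ‖w‖ = ‖(w - (N : ℂ)⁻¹) + (N : ℂ)⁻¹‖ := by rw [sub_add_cancel]
    _ ≤ _ := norm_add_le _ _
    _ ≤ _ := by linarith
end events

section wop

theorem Fl_mono {N d : ℕ} {P P' : Matrix (Fin N) (Fin N) ℝ → Prop}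
    (h : ∀ A, IsAdjMat N d A → P A → P' A) : Fl N d P' ≤ Fl N d P := by
  classical
  unfold Fl
  norm_cast
  refine Finset.card_le_card fun A hA => ?_
  rw [Finset.mem_filter] at hA ⊢
  exact ⟨hA.1, fun hp => hA.2 (h A (mem_Gr.1 hA.1) hp)⟩

theorem Fl_and {N d : ℕ} (P P' : Matrix (Fin N) (Fin N) ℝ → Prop) :
    Fl N d (fun A => P A ∧ P' A) ≤ Fl N d P + Fl N d P' := by
  classical
  unfold Fl
  norm_cast
  refine (Finset.card_le_card ?_).trans (Finset.card_union_le _ _)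
  intro A hA
  simp only [Finset.mem_union, Finset.mem_filter] at hA ⊢
  tauto

theorem Fl_all {N d : ℕ} {ι : Type*} [Fintype ι] (P : ι → Matrix (Fin N) (Fin N) ℝ → Prop) {b : ℝ}
    (h : ∀ i, Fl N d (P i) ≤ b) : Fl N d (fun A => ∀ i, P i A) ≤ Fintype.card ι * b := by
  classical
  have : Fl N d (fun A => ∀ i, P i A) ≤ ∑ i, Fl N d (P i) := by
    unfold Fl
    norm_cast
    refine (Finset.card_le_card (t := Finset.univ.biUnion
      fun i => (Gr N d).filter (fun A => ¬ P i A)) ?_).trans Finset.card_biUnion_le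
    intro A hA
    simp only [Finset.mem_biUnion, Finset.mem_filter, Finset.mem_univ, true_and] at hA ⊢
    obtain ⟨h1, h2⟩ := hA
    push Not at h2
    obtain ⟨i, hi⟩ := h2
    exact ⟨i, h1, hi⟩
  refine this.trans ((Finset.sum_le_sum fun i _ => h i).trans ?_)
  simp

def Ev (τ : ℝ) (S : ℕ → ℕ → ℝ → Prop) : Prop :=
  ∃ N₀ : ℕ, ∀ N, N₀ ≤ N → ∀ d : ℕ, (N : ℝ) ^ τ ≤ (d : ℝ) → 2 * d ≤ N → ∀ E : ℝ, |E| ≤ N → S N d E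

theorem Ev.and {τ : ℝ} {S T : ℕ → ℕ → ℝ → Prop} (h : Ev τ S) (h' : Ev τ T) :
    Ev τ (fun N d E => S N d E ∧ T N d E) := by
  obtain ⟨a, ha⟩ := h
  obtain ⟨b, hb⟩ := h'
  exact ⟨max a b, fun N hN d h1 h2 E hE => ⟨ha N (le_trans (le_max_left _ _) hN) d h1 h2 E hE,
    hb N (le_trans (le_max_right _ _) hN) d h1 h2 E hE⟩⟩

theorem Ev.mono {τ : ℝ} {S T : ℕ → ℕ → ℝ → Prop} (h : Ev τ S)
    (hst : ∀ N d E, S N d E → T N d E) : Ev τ T := by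
  obtain ⟨a, ha⟩ := h
  exact ⟨a, fun N hN d h1 h2 E hE => hst N d E (ha N hN d h1 h2 E hE)⟩

theorem Ev.big {τ : ℝ} (c : ℝ) : Ev τ (fun N _ E => c ≤ N ∧ 1 ≤ N ∧ |E| ≤ N) := by
  obtain ⟨a, ha⟩ := exists_nat_ge c
  refine ⟨max a 1, fun N hN d h1 h2 E hE => ⟨ha.trans ?_, (le_max_right _ _).trans hN, hE⟩⟩
  exact_mod_cast (le_max_left _ _).trans hN

abbrev EvF := ∀ N : ℕ, ℕ → ℝ → Matrix (Fin N) (Fin N) ℝ → Prop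

def WOP (τ : ℝ) (P : EvF) : Prop :=
  ∀ D : ℕ, Ev τ (fun N d E => (N : ℝ) ^ D * Fl N d (P N d E) ≤ (Gr N d).card)

theorem WOP.mono {τ : ℝ} {P P' : EvF} (h : WOP τ P) {S : ℕ → ℕ → ℝ → Prop} (hS : Ev τ S)
    (hst : ∀ N d E A, S N d E → IsAdjMat N d A → P N d E A → P' N d E A) : WOP τ P' := by
  intro D
  refine ((h D).and hS).mono fun N d E ⟨h1, h2⟩ => le_trans ?_ h1
  exact mul_le_mul_of_nonneg_left (Fl_mono fun A hA hp => hst N d E A h2 hA hp) (by positivity)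

theorem WOP.and {τ : ℝ} {P P' : EvF} (h : WOP τ P) (h' : WOP τ P') :
    WOP τ (fun N d E A => P N d E A ∧ P' N d E A) := by
  intro D
  refine (((h (D + 1)).and (h' (D + 1))).and (Ev.big 2)).mono fun N d E ⟨⟨h1, h2⟩, h3, h4, _⟩ => ?_
  have := Fl_and (N := N) (d := d) (P N d E) (P' N d E)
  have hp : (0 : ℝ) < (N : ℝ) ^ D := by positivity
  have hF := mul_nonneg hp.le (Fl_nn N d (P N d E))
  have hF' := mul_nonneg hp.le (Fl_nn N d (P' N d E))
  rw [pow_succ] at h1 h2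
  have e1 := mul_le_mul_of_nonneg_left this hp.le
  nlinarith

theorem WOP.true {τ : ℝ} {P' : EvF} {S : ℕ → ℕ → ℝ → Prop} (hS : Ev τ S)
    (hst : ∀ N d E A, S N d E → IsAdjMat N d A → P' N d E A) : WOP τ P' := by
  have : WOP τ (fun _ _ _ _ => True) := by
    intro D
    refine ⟨0, fun N _ d _ _ E _ => ?_⟩
    have : Fl N d (fun _ => True) = 0 := by unfold Fl; simp
    change (N : ℝ) ^ D * Fl N d (fun _ => True) ≤ _
    rw [this]; simp
  exact this.mono hS fun N d E A h hA _ => hst N d E A h hA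

def Un (n N : ℕ) : ℝ := (N : ℝ) ^ ((n : ℝ)⁻¹)

theorem Un_pow {n : ℕ} (hn : n ≠ 0) (N : ℕ) : Un n N ^ n = N :=
  Real.rpow_inv_natCast_pow (by positivity) hn

theorem Un_one {n N : ℕ} (hN : 1 ≤ N) : 1 ≤ Un n N :=
  Real.one_le_rpow (by exact_mod_cast hN) (by positivity)

theorem WOP.conc {τ : ℝ} {n : ℕ} (hn : n ≠ 0) {Q : EvF} (hQ : WOP τ Q)
    (P : ∀ N : ℕ, ℕ → ℝ → Fin N → Fin N → Matrix (Fin N) (Fin N) ℝ → Prop)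
    {S : ℕ → ℕ → ℝ → Prop} (hS : Ev τ S)
    (h : ∀ m N d E i x, S N d E → Un n N ^ (2 * m + 2) * Fl N d (P N d E i x) ≤
      Cm m * ((Gr N d).card + ((N : ℝ) ^ 6) ^ (2 * m + 2) * Fl N d (Q N d E))) :
    WOP τ (fun N d E A => ∀ i x, P N d E i x A) := by
  intro D
  set m := n * (D + 3) with hm
  refine ((hS.and (hQ (6 * (2 * m + 2)))).and (Ev.big (2 * Cm m))).mono
    fun N d E ⟨⟨h1, h2⟩, h3, h4, _⟩ => ?_
  have hN0 : (0 : ℝ) < N := by exact_mod_cast h4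
  have hg : (0 : ℝ) ≤ (Gr N d).card := by positivity
  have hC := Cm_pos m
  have key : ∀ i x, Fl N d (P N d E i x) ≤ (Gr N d).card / (N : ℝ) ^ (D + 2) := by
    intro i x
    have h5 := h m N d E i x h1
    rw [← pow_mul] at h5
    have h6 : (N : ℝ) ^ (D + 3) ≤ Un n N ^ (2 * m + 2) := by
      calc (N : ℝ) ^ (D + 3) = Un n N ^ m := by rw [hm, pow_mul, Un_pow hn]
        _ ≤ _ := pow_le_pow_right₀ (Un_one h4) (by omega)
    have hF := Fl_nn N d (P N d E i x)
    have h7 : (N : ℝ) ^ (D + 3) * Fl N d (P N d E i x) ≤ Cm m * ((Gr N d).card + (Gr N d).card) :=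
      (mul_le_mul_of_nonneg_right h6 hF).trans (h5.trans (by gcongr))
    rw [le_div_iff₀ (by positivity)]
    have h8 : (N : ℝ) * (Fl N d (P N d E i x) * (N : ℝ) ^ (D + 2)) ≤ N * (Gr N d).card := by
      calc _ = (N : ℝ) ^ (D + 3) * Fl N d (P N d E i x) := by ring
        _ ≤ _ := h7
        _ = 2 * Cm m * (Gr N d).card := by ring
        _ ≤ _ := by gcongr
    exact le_of_mul_le_mul_left h8 hN0
  have h9 := Fl_all (N := N) (d := d) (ι := Fin N × Fin N) (fun p => P N d E p.1 p.2)
    (fun p => key p.1 p.2)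
  have h10 : Fl N d (fun A => ∀ i x, P N d E i x A) ≤
      Fl N d (fun A => ∀ p : Fin N × Fin N, P N d E p.1 p.2 A) :=
    Fl_mono fun A _ hA i x => hA (i, x)
  calc _ ≤ (N : ℝ) ^ D * (Fintype.card (Fin N × Fin N) * ((Gr N d).card / (N : ℝ) ^ (D + 2))) := by
        gcongr; exact h10.trans h9
    _ = (Gr N d).card := by
      simp only [Fintype.card_prod, Fintype.card_fin]; push_cast; field_simp; ring
    _ ≤ _ := le_rfl

/-- spectral parameter -/
def zs (η : ℝ) (E : ℝ) : ℂ := ⟨E, η⟩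

theorem wop_Q3 {τ : ℝ} {n : ℕ} (hn : n ≠ 0) (η : ℕ → ℝ)
    (hS : Ev τ (fun N d _ => Par N d (Un n N) (η N)))
    (hQ : WOP τ (fun N d E A => Q1 d (qval N d) ⟨E, η N⟩ (Un n N ^ 5) A)) :
    WOP τ (fun N d E A => Q3 d (qval N d) ⟨E, η N⟩ (Un n N) A) := by
  have w1 := WOP.conc hn hQ (fun N d E l x A =>
    |gL (sqφ d (qval N d) ⟨E, η N⟩ x) d l A| ≤ d / Un n N ^ 80 * Un n N) hS
    (fun m N d E i x h => L1conc h _ (nice_sq d h.qpos _ x) i m)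
  have w2 := WOP.conc hn hQ (fun N d E l x A =>
    |gL (dgφ d (qval N d) ⟨E, η N⟩ 1) d l A| ≤ d / Un n N ^ 80 * Un n N) hS
    (fun m N d E i x h => L1conc h _ (nice_dg d h.qpos _ 1 (by simp)) i m)
  have w3 := WOP.conc hn hQ (fun N d E l x A =>
    |gL (dgφ d (qval N d) ⟨E, η N⟩ (-Complex.I)) d l A| ≤ d / Un n N ^ 80 * Un n N) hS
    (fun m N d E i x h => L1conc h _ (nice_dg d h.qpos _ _ (by simp)) i m)
  have w : WOP τ (fun N d E A => Q2 d (qval N d) ⟨E, η N⟩ (Un n N) A) := hQ.and (w1.and (w2.and w3))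
  have v1 := WOP.conc hn w (fun N d E i x A =>
    |gM d (qval N d) ⟨E, η N⟩ 1 i x A| ≤ qval N d / Un n N ^ 9 * Un n N) hS
    (fun m N d E i x h => Mconc h i x 1 (by simp) m)
  have v2 := WOP.conc hn w (fun N d E i x A =>
    |gM d (qval N d) ⟨E, η N⟩ (-Complex.I) i x A| ≤ qval N d / Un n N ^ 9 * Un n N) hS
    (fun m N d E i x h => Mconc h i x _ (by simp) m)
  exact v1.and v2

theorem dich {N d : ℕ} {U E η : ℝ} (h : Par N d U η) {A : Matrix (Fin N) (Fin N) ℝ}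
    (hR : U ≤ ‖(⟨E, η⟩ : ℂ)‖ → Q1 d (qval N d) ⟨E, η⟩ (20 * U) A)
    (hQ : Q3 d (qval N d) ⟨E, η⟩ U A) :
    Q1 d (qval N d) ⟨E, η⟩ (U ^ 3) A ∧
      (U ≤ ‖(⟨E, η⟩ : ℂ)‖ → Q1 d (qval N d) ⟨E, η⟩ 5 A) := by
  have hU := h.hU
  have hN8 := h.N8
  have hN : 0 < N := by omega
  have hNp := h.Npos
  have hsc := Q3_sc h hQ
  have hmbd : ∀ Γ, (∀ a b, ‖GG d (qval N d) A ⟨E, η⟩ a b‖ ≤ Γ) → ‖mb d (qval N d) A ⟨E, η⟩‖ ≤ Γ :=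
    fun Γ hΓ => mb_le hN hΓ
  have hmd : mb d (qval N d) A ⟨E, η⟩ = (N : ℂ)⁻¹ * ∑ k, GG d (qval N d) A ⟨E, η⟩ k k := rfl
  unfold Q1 at *
  set q := qval N d
  set z : ℂ := ⟨E, η⟩ with hzd
  set G := GG d q A z with hG
  set m := mb d q A z with hmm
  have hz0 := norm_nonneg z
  have hsc' : ∀ i x, ‖z + m‖ * ‖G i x‖ ≤ 5 / 4 := by
    intro i x
    rw [← norm_mul]
    have h1 := hsc i x
    have h2 : ‖(if i = x then (1 : ℂ) else 0)‖ ≤ 1 := by split_ifs <;> simp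
    have h3 := norm_sub_norm_le ((z + m) * G i x) (-(if i = x then (1 : ℂ) else 0))
    rw [sub_neg_eq_add, norm_neg] at h3
    linarith
  by_cases hzU : U ≤ ‖z‖
  · have h5 : ∀ a b, (1 + ‖z‖) * ‖G a b‖ ≤ 5 := by
      have hΓ : ∀ a b, ‖G a b‖ ≤ 20 := fun a b => by
        have h1 := hR hzU a b
        have h2 := norm_nonneg (G a b)
        by_contra hc
        push Not at hc
        nlinarith
      have hm := hmbd 20 hΓ
      have h6 : ‖z‖ / 2 ≤ ‖z + m‖ := by
        have := norm_sub_norm_le z (-m)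
        rw [sub_neg_eq_add, norm_neg] at this
        linarith
      intro a b
      have h1 := hsc' a b
      have h2 := norm_nonneg (G a b)
      have h3 : ‖z‖ / 2 * ‖G a b‖ ≤ ‖z + m‖ * ‖G a b‖ := by gcongr
      nlinarith
    refine ⟨fun a b => (h5 a b).trans ?_, fun _ => h5⟩
    have := upow hU 5 (by norm_num) (a := 0) (b := 3) (by norm_num)
    simpa using this
  · refine ⟨?_, fun hc => absurd hc hzU⟩
    push Not at hzU
    have hav : ‖(z + m) * m + 1‖ ≤ 1 / 4 := by
      have hNc : (N : ℂ) ≠ 0 := by exact_mod_cast hN.ne'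
      have e : (z + m) * m + 1 = (N : ℂ)⁻¹ * ∑ k, ((z + m) * G k k + 1) := by
        rw [Finset.sum_add_distrib, ← Finset.mul_sum]
        conv_lhs => rw [show (z + m) * m = (z + m) * ((N : ℂ)⁻¹ * ∑ k, G k k) by rw [← hmd]]
        simp
        field_simp
      rw [e, norm_mul, norm_inv, Complex.norm_natCast]
      calc _ ≤ (N : ℝ)⁻¹ * ∑ k : Fin N, (1 / 4 : ℝ) := by
            gcongr
            refine (norm_sum_le _ _).trans (Finset.sum_le_sum fun k _ => ?_)
            simpa using hsc k k
        _ = 1 / 4 := by simp; field_simp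
    have hav1 : ‖z + m‖ * ‖m‖ ≤ 5 / 4 := by
      have h3 := norm_sub_norm_le ((z + m) * m) (-1)
      rw [sub_neg_eq_add, norm_neg, norm_one, norm_mul] at h3
      linarith
    have hav2 : 3 / 4 ≤ ‖z + m‖ * ‖m‖ := by
      have h3 := norm_sub_norm_le (1 : ℂ) (-((z + m) * m))
      rw [sub_neg_eq_add, norm_neg, norm_one, norm_mul, add_comm 1] at h3
      linarith
    have hm2 : ‖m‖ ≤ ‖z‖ + 2 := by
      by_contra hc
      push Not at hc
      have := norm_sub_norm_le m (-z)
      rw [sub_neg_eq_add, norm_neg, add_comm m] at this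
      nlinarith
    intro a b
    have h1 := hsc' a b
    have h2 := norm_nonneg (G a b)
    have h3 := norm_nonneg (z + m)
    have h4 : ‖G a b‖ * (3 / 4) ≤ 5 / 4 * (‖z‖ + 2) := by
      calc _ ≤ ‖G a b‖ * (‖z + m‖ * ‖m‖) := by gcongr
        _ = (‖z + m‖ * ‖G a b‖) * ‖m‖ := by ring
        _ ≤ _ := by gcongr
    have h5 : ‖G a b‖ ≤ 2 * (U + 2) := by linarith
    calc _ ≤ (1 + U) * (2 * (U + 2)) := by gcongr
      _ ≤ U ^ 3 := by nlinarith [sq_nonneg U]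

def ηs (n s N : ℕ) : ℝ := N / Un n N ^ s

theorem ev_par {τ : ℝ} (hτ : 0 < τ) {n s : ℕ} (hn : 0 < n) (hnτ : 400 ≤ τ * n) (hs : s + 100 ≤ 2 * n) :
    Ev τ (fun N d _ => Par N d (Un n N) (ηs n s N)) := by
  have ht : Tendsto (fun N : ℕ => Un n N) atTop atTop :=
    (tendsto_rpow_atTop (by positivity)).comp tendsto_natCast_atTop_atTop
  obtain ⟨a, ha⟩ := eventually_atTop.1 (ht.eventually_ge_atTop 1000)
  refine ⟨max a 1, fun N hN d h1 h2 E _ => ?_⟩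
  have hU := ha N ((le_max_left _ _).trans hN)
  have hN1 : 1 ≤ N := (le_max_right _ _).trans hN
  have hN1' : (1 : ℝ) ≤ N := by exact_mod_cast hN1
  have hU1 : 1 ≤ Un n N := by linarith
  have hn' : (0 : ℝ) < n := by exact_mod_cast hn
  refine ⟨hU, le_trans ?_ h1, h2, ?_⟩
  · unfold Un
    rw [← Real.rpow_natCast, ← Real.rpow_mul (by positivity)]
    refine Real.rpow_le_rpow_of_exponent_le hN1' ?_
    rw [inv_mul_le_iff₀ hn']
    push_cast
    linarith
  · unfold ηs
    rw [← mul_div_assoc, le_div_iff₀ (by positivity), ← pow_add]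
    calc _ ≤ Un n N ^ (n + n) := pow_le_pow_right₀ hU1 (by omega)
      _ = _ := by rw [pow_add, Un_pow hn.ne']

def Ps (n s : ℕ) : EvF := fun N d E A =>
  Q1 d (qval N d) ⟨E, ηs n s N⟩ (Un n N ^ 3) A ∧
    (Un n N ≤ ‖(⟨E, ηs n s N⟩ : ℂ)‖ → Q1 d (qval N d) ⟨E, ηs n s N⟩ 5 A)

theorem z_norm_mono {E η η' : ℝ} (h0 : 0 ≤ η) (h : η ≤ η') : ‖(⟨E, η⟩ : ℂ)‖ ≤ ‖(⟨E, η'⟩ : ℂ)‖ := by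
  rw [Complex.norm_def, Complex.norm_def]
  apply Real.sqrt_le_sqrt
  simp only [Complex.normSq_mk]
  nlinarith

theorem Q1_scale {N d : ℕ} (hN : 0 < N) {A : Matrix (Fin N) (Fin N) ℝ} (hA : IsAdjMat N d A)
    {q E η M K : ℝ} (hη : 0 < η) (hM : 1 ≤ M) (hQ : Q1 d q ⟨E, η⟩ K A) :
    Q1 d q ⟨E, η / M⟩ (4 * M * K) A := by
  have hM0 : 0 < M := by linarith
  intro a b
  have hzz : ‖(⟨E, η / M⟩ : ℂ)‖ ≤ ‖(⟨E, η⟩ : ℂ)‖ :=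
    z_norm_mono (by positivity) (div_le_self hη.le hM)
  have h0 := norm_nonneg (⟨E, η⟩ : ℂ)
  have h1 := G_scale (q := q) hN hA hη hM (K := K / (1 + ‖(⟨E, η⟩ : ℂ)‖))
    (fun x y => by rw [le_div_iff₀ (by positivity), mul_comm]; exact hQ x y) a b
  calc _ ≤ (1 + ‖(⟨E, η⟩ : ℂ)‖) * (4 * M * (K / (1 + ‖(⟨E, η⟩ : ℂ)‖))) := by gcongr
    _ = _ := by field_simp

theorem Q1_mono {N d : ℕ} {A : Matrix (Fin N) (Fin N) ℝ} {q K K' : ℝ} {z : ℂ} (h : Q1 d q z K A)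
    (hK : K ≤ K') : Q1 d q z K' A := fun a b => (h a b).trans hK

theorem wop_P {τ : ℝ} (hτ : 0 < τ) {n : ℕ} (hn : 0 < n) (hnτ : 400 ≤ τ * n) :
    ∀ s : ℕ, s + 100 ≤ 2 * n → WOP τ (Ps n s) := by
  intro s
  induction s with
  | zero =>
    intro hs
    refine WOP.true ((ev_par hτ hn hnτ hs).and (Ev.big 1)) ?_
    rintro N d E A ⟨h, h1, h2, hE⟩ hA
    have hNp := h.Npos
    have hη : ηs n 0 N = N := by simp [ηs]
    have h5 : Q1 d (qval N d) ⟨E, ηs n 0 N⟩ 5 A := by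
      intro a b
      have hz : 0 < (⟨E, ηs n 0 N⟩ : ℂ).im := h.ηpos
      have h3 := G_le_inv (q := qval N d) h2 hA hz a b
      have h4 : ‖(⟨E, ηs n 0 N⟩ : ℂ)‖ ≤ 2 * N := by
        refine (Complex.norm_le_abs_re_add_abs_im _).trans ?_
        simp only [hη]
        rw [abs_of_pos hNp]; linarith
      simp only [hη] at h3 h4 ⊢
      calc _ ≤ (1 + 2 * (N : ℝ)) * (1 / N) := by gcongr
        _ ≤ 5 := by rw [mul_one_div, div_le_iff₀ hNp]; linarith
    refine ⟨Q1_mono h5 ?_, fun _ => h5⟩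
    have := upow h.hU 5 (by norm_num) (a := 0) (b := 3) (by norm_num)
    simpa using this
  | succ s ih =>
    intro hs
    have hP := ih (by omega)
    have ep := ev_par hτ hn hnτ hs
    have ep0 := ev_par (s := s) hτ hn hnτ (by omega)
    have hstep : ∀ N, 1 ≤ Un n N → ηs n (s + 1) N = ηs n s N / Un n N := by
      intro N hN
      unfold ηs
      field_simp
      ring
    have hR : WOP τ (fun N d E A => Q1 d (qval N d) ⟨E, ηs n (s + 1) N⟩ (Un n N ^ 5) A ∧
        (Un n N ≤ ‖(⟨E, ηs n (s + 1) N⟩ : ℂ)‖ →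
          Q1 d (qval N d) ⟨E, ηs n (s + 1) N⟩ (20 * Un n N) A)) := by
      refine hP.mono ep0 ?_
      rintro N d E A h hA ⟨h1, h2⟩
      have hN : 0 < N := by have := h.N8; omega
      rw [hstep N h.U1]
      constructor
      · refine Q1_mono (Q1_scale hN hA h.ηpos h.U1 h1) ?_
        have := upow h.hU 4 (by norm_num) (a := 4) (b := 5) (by norm_num)
        calc _ = 4 * Un n N ^ 4 := by ring
          _ ≤ _ := this
      · intro hz
        refine Q1_mono (Q1_scale hN hA h.ηpos h.U1 (h2 (hz.trans ?_))) (by linarith)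
        have := h.ηpos
        have := h.U1
        exact z_norm_mono (by positivity) (div_le_self h.ηpos.le h.U1)
    have hQ5 : WOP τ (fun N d E A => Q1 d (qval N d) ⟨E, ηs n (s + 1) N⟩ (Un n N ^ 5) A) :=
      hR.mono ep0 fun N d E A _ _ h => h.1
    have h3 := wop_Q3 hn.ne' (ηs n (s + 1)) ep hQ5
    refine (hR.and h3).mono ep ?_
    rintro N d E A h hA ⟨⟨_, hr⟩, hq3⟩
    exact dich h hr hq3

end wop

theorem Gr_nonempty {N d : ℕ} (hN : 0 < N) (h2 : 2 * d ≤ N) (he : Even (d * N)) :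
    ∃ A, IsAdjMat N d A := by
  classical
  have : NeZero N := ⟨hN.ne'⟩
  have hpar : d % 2 = 0 ∨ N % 2 = 0 := by
    rcases Nat.even_mul.1 he with h | h
    · left; exact Nat.even_iff.1 h
    · right; exact Nat.even_iff.1 h
  set T : Finset ℕ := (Finset.Icc 1 (d / 2) ∪ Finset.Ico (N - d / 2) N) ∪
    (if d % 2 = 0 then ∅ else {N / 2}) with hT
  have memT : ∀ t, t ∈ T ↔ ((1 ≤ t ∧ t ≤ d / 2) ∨ (N - d / 2 ≤ t ∧ t < N)) ∨
      (d % 2 = 1 ∧ t = N / 2) := by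
    intro t
    rw [hT, Finset.mem_union, Finset.mem_union, Finset.mem_Icc, Finset.mem_Ico]
    split_ifs with h
    · simp; omega
    · have : d % 2 = 1 := by omega
      simp [this]
  have cardT : T.card = d := by
    rw [hT, Finset.card_union_of_disjoint, Finset.card_union_of_disjoint]
    · simp only [Nat.card_Icc, Nat.card_Ico]
      split_ifs with h
      · simp; omega
      · simp; omega
    · rw [Finset.disjoint_left]; intro a; simp only [Finset.mem_Icc, Finset.mem_Ico]; omega
    · rw [Finset.disjoint_left]; intro a
      simp only [Finset.mem_Icc, Finset.mem_Ico, Finset.mem_union]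
      split_ifs with h
      · simp
      · simp only [Finset.mem_singleton]; omega
  have hlt : ∀ t ∈ T, t < N := by intro t ht; rw [memT] at ht; omega
  set S : Finset (Fin N) := T.attachFin hlt with hS
  have memS : ∀ x : Fin N, x ∈ S ↔ (x : ℕ) ∈ T := fun x => Finset.mem_attachFin _
  have hneg : ∀ x ∈ S, -x ∈ S := by
    intro x hx
    rw [memS] at hx ⊢
    have hx' := x.2
    have hv : ((-x : Fin N) : ℕ) = (N - x) % N := by
      rw [Fin.val_neg']
    rw [memT] at hx ⊢
    have hx1 : 1 ≤ (x : ℕ) := by omega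
    rw [hv, Nat.mod_eq_of_lt (by omega)]
    omega
  have h0 : (0 : Fin N) ∉ S := by
    rw [memS, memT]; simp; omega
  refine ⟨Matrix.of fun x y => if y - x ∈ S then 1 else 0, ?_, ?_, ?_, ?_⟩
  · ext x y
    simp only [Matrix.transpose_apply, Matrix.of_apply]
    have : x - y ∈ S ↔ y - x ∈ S :=
      ⟨fun h => by simpa using hneg _ h, fun h => by simpa using hneg _ h⟩
    simp [this]
  · intro i; simp [h0]
  · intro i j
    simp only [Matrix.of_apply]
    split_ifs <;> simp
  · intro i
    simp only [Matrix.of_apply]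
    rw [Fintype.sum_equiv (Equiv.subRight i) _ (fun y => if y ∈ S then (1 : ℝ) else 0)
      (fun y => by simp)]
    rw [Finset.sum_ite_mem, Finset.univ_inter, Finset.sum_const, nsmul_one, hS,
      Finset.card_attachFin, cardT]

theorem eig_le {N d : ℕ} (hN : 0 < N) {A : Matrix (Fin N) (Fin N) ℝ} (hA : IsAdjMat N d A)
    {u : Fin N → ℝ} {θ : ℝ} (hu : A.mulVec u = θ • u) (h1 : ∑ i, u i ^ 2 = 1) : |θ| ≤ d := by
  have : Nonempty (Fin N) := ⟨⟨0, hN⟩⟩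
  obtain ⟨i, hi⟩ := Finite.exists_max fun i => |u i|
  have hpos : 0 < |u i| := by
    by_contra hc
    have h0 : ∀ j, u j = 0 := fun j => by
      have := hi j
      have h3 := abs_nonneg (u j)
      exact abs_eq_zero.1 (by linarith)
    simp [h0] at h1
  have h2 := congrFun hu i
  simp only [Matrix.mulVec, dotProduct, Pi.smul_apply, smul_eq_mul] at h2
  have h3 : |θ| * |u i| ≤ d * |u i| := by
    rw [← abs_mul, ← h2, ← hA.2.2.2 i, Finset.sum_mul]
    refine (Finset.abs_sum_le_sum_abs _ _).trans (Finset.sum_le_sum fun j _ => ?_)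
    rw [abs_mul, abs_of_nonneg (hA.nn i j)]
    exact mul_le_mul_of_nonneg_left (hi j) (hA.nn i j)
  exact le_of_mul_le_mul_right h3 hpos

theorem w_rep {N d : ℕ} {A : Matrix (Fin N) (Fin N) ℝ} (hA : IsAdjMat N d A)
    {q θ : ℝ} {z : ℂ} (hz : 0 < z.im) {w : Fin N → ℝ} (hw : ∀ i, ∑ j, A i j * w j = θ * w i)
    (hs : ∑ i, w i = 0) (i : Fin N) :
    (w i : ℂ) = (((θ / q : ℝ) : ℂ) - z) * ∑ x, (w x : ℂ) * GG d q A z x i := by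
  have hH := H_mul_G (q := q) hA hz
  set G := GG d q A z
  set v : Fin N → ℂ := fun x => (w x : ℂ) with hv
  have h1 : v ᵥ* HC q A = ((θ / q : ℝ) : ℂ) • v := by
    ext y
    simp only [Matrix.vecMul, dotProduct, HC, Matrix.of_apply, Pi.smul_apply, smul_eq_mul, hv]
    have := hw y
    have e : ∑ x, w x * (q⁻¹ * A x y) = θ / q * w y := by
      rw [div_mul_eq_mul_div, ← this, Finset.sum_div]
      refine Finset.sum_congr rfl fun x _ => ?_
      rw [hA.symm_apply x y]; ring
    exact_mod_cast e
  have h2 := congrFun (congrArg (fun M => v ᵥ* M) hH) i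
  simp only [← Matrix.vecMul_vecMul, h1, Matrix.vecMul_add, Matrix.vecMul_sub, Matrix.vecMul_one,
    Matrix.smul_vecMul, Matrix.vecMul_smul, Pi.add_apply, Pi.sub_apply, Pi.smul_apply,
    smul_eq_mul] at h2
  have h3 : (v ᵥ* JN N) i = 0 := by
    simp only [Matrix.vecMul, dotProduct, JN, Matrix.of_apply, ← Finset.sum_mul, hv]
    have : ∑ x, (w x : ℂ) = 0 := by exact_mod_cast hs
    rw [this, zero_mul]
  rw [h3] at h2
  have h4 : (v ᵥ* G) i = ∑ x, (w x : ℂ) * G x i := rfl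
  rw [h4] at h2
  have h5 : v i = (w i : ℂ) := rfl
  rw [h5] at h2
  linear_combination -h2

theorem deloc {N d : ℕ} {U η E : ℝ} (hp : Par N d U η) (hη : η * N = U ^ 100)
    {A : Matrix (Fin N) (Fin N) ℝ} (hA : IsAdjMat N d A) (hQ : Q1 d (qval N d) ⟨E, η⟩ (U ^ 3) A)
    {u : Fin N → ℝ} {θ : ℝ} (hu : A.mulVec u = θ • u) (h1 : ∑ i, u i ^ 2 = 1)
    (hE : |θ / qval N d - E| ≤ η) (i : Fin N) : |u i| ≤ U ^ 53 / Real.sqrt N := by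
  have hNp := hp.Npos
  have hN : 0 < N := by exact_mod_cast hNp
  have hηp := hp.ηpos
  have hU := hp.hU
  have hU1 := hp.U1
  have hz : 0 < (⟨E, η⟩ : ℂ).im := hηp
  have hu' : ∀ i, ∑ j, A i j * u j = θ * u i := fun i => congrFun hu i
  set μ : ℝ := (N : ℝ)⁻¹ * ∑ i, u i with hμ
  have hsum : ∑ i, u i = N * μ := by rw [hμ]; field_simp
  have hμθ : θ * μ = d * μ := by
    have : ∑ i, ∑ j, A i j * u j = ∑ i, θ * u i := Finset.sum_congr rfl fun i _ => hu' i
    rw [Finset.sum_comm, ← Finset.mul_sum, hsum] at this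
    simp only [← Finset.sum_mul, hA.colsum] at this
    rw [← Finset.mul_sum, hsum] at this
    have h3 : (N : ℝ) * (θ * μ) = N * (d * μ) := by linarith
    exact mul_left_cancel₀ hNp.ne' h3
  set w : Fin N → ℝ := fun i => u i - μ with hw
  have hww : ∀ i, ∑ j, A i j * w j = θ * w i := by
    intro i
    simp only [hw, mul_sub, Finset.sum_sub_distrib, hu', ← Finset.sum_mul, hA.2.2.2 i]
    rw [hμθ]
  have hws : ∑ i, w i = 0 := by
    simp only [hw, Finset.sum_sub_distrib, hsum]; simp
  have hw2 : ∑ i, w i ^ 2 = 1 - N * μ ^ 2 := by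
    have : ∀ i, w i ^ 2 = u i ^ 2 - 2 * μ * u i + μ ^ 2 := fun i => by simp only [hw]; ring
    simp only [this, Finset.sum_add_distrib, Finset.sum_sub_distrib, h1, ← Finset.mul_sum, hsum]
    simp; ring
  have hw0 : 0 ≤ ∑ i, w i ^ 2 := Finset.sum_nonneg fun i _ => sq_nonneg _
  have hrep := w_rep (q := qval N d) hA hz hww hws i
  have hward := ward (q := qval N d) hN hA hz i
  have hQi := hQ i i
  set G := GG d (qval N d) A ⟨E, η⟩ with hG
  have hGi : (G i i).im ≤ U ^ 3 := by
    have a1 := (Complex.abs_im_le_norm (G i i))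
    have a2 := le_abs_self (G i i).im
    have a3 := norm_nonneg (⟨E, η⟩ : ℂ)
    have a4 := norm_nonneg (G i i)
    nlinarith
  have hS : ‖∑ x, (w x : ℂ) * G x i‖ ^ 2 ≤ U ^ 3 / η := by
    have b1 : ‖∑ x, (w x : ℂ) * G x i‖ ≤ ∑ x, |w x| * ‖G x i‖ := by
      refine (norm_sum_le _ _).trans (le_of_eq (Finset.sum_congr rfl fun x _ => ?_))
      rw [norm_mul, Complex.norm_real, Real.norm_eq_abs]
    have b2 := Finset.sum_mul_sq_le_sq_mul_sq Finset.univ (fun x => |w x|) (fun x => ‖G x i‖)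
    simp only [sq_abs] at b2
    rw [hward] at b2
    have b3 : (G i i).im / η ≤ U ^ 3 / η := by gcongr
    have b4 : 0 ≤ (G i i).im / η := by
      have : 0 ≤ ∑ j, ‖G j i‖ ^ 2 := Finset.sum_nonneg fun i _ => sq_nonneg _
      rw [hward] at this; exact this
    calc _ ≤ (∑ x, |w x| * ‖G x i‖) ^ 2 := by gcongr
      _ ≤ _ := b2
      _ ≤ 1 * ((G i i).im / η) := by
        refine mul_le_mul_of_nonneg_right ?_ b4
        rw [hw2]
        have : 0 ≤ (N : ℝ) * μ ^ 2 := by positivity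
        linarith
      _ ≤ _ := by rw [one_mul]; exact b3
  have hlz : ‖((θ / qval N d : ℝ) : ℂ) - ⟨E, η⟩‖ ^ 2 ≤ 2 * η ^ 2 := by
    rw [← Complex.normSq_eq_norm_sq, Complex.normSq_apply]
    simp only [Complex.sub_re, Complex.sub_im, Complex.ofReal_re, Complex.ofReal_im]
    have := sq_le_sq' (neg_le_of_abs_le hE) (le_of_abs_le hE)
    nlinarith
  have hwi : w i ^ 2 ≤ 2 * η * U ^ 3 := by
    have c1 : ‖(w i : ℂ)‖ ^ 2 = w i ^ 2 := by
      rw [Complex.norm_real, Real.norm_eq_abs, sq_abs]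
    rw [← c1, hrep, norm_mul, mul_pow]
    calc _ ≤ 2 * η ^ 2 * (U ^ 3 / η) := by gcongr
      _ = _ := by field_simp
  have hfin : (N : ℝ) * u i ^ 2 ≤ U ^ 106 := by
    have e : u i = w i + μ := by simp [hw]
    have e1 : u i ^ 2 ≤ 2 * w i ^ 2 + 2 * μ ^ 2 := by rw [e]; nlinarith [sq_nonneg (w i - μ)]
    have e2 : (N : ℝ) * w i ^ 2 ≤ 2 * U ^ 103 := by
      calc _ ≤ (N : ℝ) * (2 * η * U ^ 3) := by gcongr
        _ = 2 * (η * N) * U ^ 3 := by ring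
        _ = _ := by rw [hη]; ring
    have e3 : (N : ℝ) * μ ^ 2 ≤ 1 := by linarith
    have e4 := upow hU 10 (by norm_num) (a := 103) (b := 106) (by norm_num)
    have e5 : 1 ≤ U ^ 103 := one_le_pow₀ hU1
    have e6 : (N : ℝ) * u i ^ 2 ≤ N * (2 * w i ^ 2 + 2 * μ ^ 2) := by gcongr
    linarith
  refine abs_le_of_sq_le_sq ?_ (by positivity)
  rw [div_pow, Real.sq_sqrt hNp.le, le_div_iff₀ hNp, ← pow_mul, mul_comm]
  exact hfin

theorem PrReg_ge {N d D : ℕ} (hN : 0 < N) (hG : ∃ A, IsAdjMat N d A)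
    {P : Matrix (Fin N) (Fin N) ℝ → Prop} (h : (N : ℝ) ^ D * Fl N d P ≤ (Gr N d).card) :
    1 - ((N : ℝ) ^ D)⁻¹ ≤ PrReg N d P := by
  classical
  have hNp : (0 : ℝ) < N := by exact_mod_cast hN
  have c1 : Nat.card {A : Matrix (Fin N) (Fin N) ℝ // IsAdjMat N d A} = (Gr N d).card :=
    Nat.subtype_card _ fun A => mem_Gr
  have c2 : Nat.card {A : Matrix (Fin N) (Fin N) ℝ // IsAdjMat N d A ∧ P A} =
      ((Gr N d).filter P).card :=
    Nat.subtype_card _ fun A => by rw [Finset.mem_filter, mem_Gr]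
  obtain ⟨A, hA⟩ := hG
  have hpos : (0 : ℝ) < (Gr N d).card := by
    exact_mod_cast Finset.card_pos.2 ⟨A, mem_Gr.2 hA⟩
  unfold PrReg
  rw [c1, c2, le_div_iff₀ hpos]
  have c3 : (((Gr N d).filter P).card : ℝ) + Fl N d P = (Gr N d).card := by
    unfold Fl
    norm_cast
    convert Finset.card_filter_add_card_filter_not (s := Gr N d) P
  have c4 : Fl N d P ≤ ((N : ℝ) ^ D)⁻¹ * (Gr N d).card := by
    rw [inv_mul_eq_div, le_div_iff₀ (by positivity)]; linarith
  linarith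

/-- Complete eigenvector delocalization for random `d`-regular graphs, `N^τ ≤ d ≤ N/2`. -/
theorem eigenvector_delocalization
    (τ : ℝ) (hτ0 : 0 < τ) (hτ1 : τ < 1) (ε D : ℝ) (hε : 0 < ε) (hD : 0 < D) :
    ∃ N₀ : ℕ, ∀ N, N₀ ≤ N → ∀ d : ℕ,
      (N : ℝ) ^ τ ≤ (d : ℝ) → 2 * d ≤ N → Even (d * N) →
      1 - (N : ℝ) ^ (-D) ≤
        PrReg N d (fun A => ∀ (u : Fin N → ℝ) (θ : ℝ),
          A.mulVec u = θ • u → ∑ i, u i ^ 2 = 1 →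
          ∀ i, |u i| ≤ (N : ℝ) ^ (ε - 1 / 2 : ℝ)) := by
  obtain ⟨n, hn⟩ := exists_nat_ge (400 / τ + 53 / ε + 50)
  have hq1 : 0 < 400 / τ := by positivity
  have hq2 : 0 < 53 / ε := by positivity
  have hn50 : 50 ≤ n := by
    have : (50 : ℝ) ≤ n := by linarith
    exact_mod_cast this
  have hnτ : 400 ≤ τ * n := by
    have : 400 / τ ≤ n := by linarith
    rw [div_le_iff₀ hτ0] at this; linarith
  have hnε : 53 ≤ ε * n := by
    have : 53 / ε ≤ n := by linarith
    rw [div_le_iff₀ hε] at this; linarith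
  have hn0 : 0 < n := by omega
  have hn0' : (0 : ℝ) < n := by exact_mod_cast hn0
  obtain ⟨D', hD'⟩ := exists_nat_ge D
  obtain ⟨N₁, hev⟩ := (wop_P hτ0 hn0 hnτ (2 * n - 100) (by omega) (D' + 3)).and
    (ev_par (s := 2 * n - 100) hτ0 hn0 hnτ (by omega))
  refine ⟨N₁, fun N hN d hd h2 he => ?_⟩
  have hp := (hev N hN d hd h2 0 (by simp)).2
  have hF := fun E hE => (hev N hN d hd h2 E hE).1
  have hNp := hp.Npos
  have hN8 := hp.N8
  have hN8' : (8 : ℝ) ≤ N := by exact_mod_cast hN8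
  have hU1 := hp.U1
  have hηN : ηs n (2 * n - 100) N * N = Un n N ^ 100 := by
    unfold ηs
    rw [div_mul_eq_mul_div, div_eq_iff (by positivity), ← pow_add,
      show 100 + (2 * n - 100) = n + n by omega, pow_add, Un_pow hn0.ne']
  set U := Un n N with hU
  set η := ηs n (2 * n - 100) N with hη
  have hηN1 : 1 / (N : ℝ) ≤ η := by
    rw [div_le_iff₀ hNp, hηN]; exact one_le_pow₀ hU1
  set Eg : Fin (2 * N ^ 2 + 1) → ℝ := fun t => ((t : ℕ) - (N : ℝ) ^ 2) / N with hEg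
  have hEgN : ∀ t, |Eg t| ≤ N := by
    intro t
    have ht : ((t : ℕ) : ℝ) ≤ 2 * (N : ℝ) ^ 2 := by exact_mod_cast Nat.lt_succ_iff.1 t.2
    have ht0 : (0 : ℝ) ≤ ((t : ℕ) : ℝ) := by positivity
    simp only [hEg]
    rw [abs_div, abs_of_pos hNp, div_le_iff₀ hNp, abs_le]
    constructor <;> nlinarith
  have hall : (N : ℝ) ^ D' * Fl N d (fun A => ∀ t, Ps n (2 * n - 100) N d (Eg t) A) ≤
      (Gr N d).card := by
    have a1 := Fl_all (N := N) (d := d) (fun t => Ps n (2 * n - 100) N d (Eg t))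
      (b := (Gr N d).card / (N : ℝ) ^ (D' + 3)) (fun t => by
        rw [le_div_iff₀ (by positivity), mul_comm]; exact hF _ (hEgN t))
    rw [Fintype.card_fin] at a1
    push_cast at a1
    calc _ ≤ (N : ℝ) ^ D' * ((2 * (N : ℝ) ^ 2 + 1) * ((Gr N d).card / (N : ℝ) ^ (D' + 3))) := by
          gcongr
      _ = (2 * (N : ℝ) ^ 2 + 1) / (N : ℝ) ^ 3 * (Gr N d).card := by
          rw [pow_add]; field_simp
      _ ≤ 1 * (Gr N d).card := by
          gcongr
          rw [div_le_one (by positivity)]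
          nlinarith [sq_nonneg (N : ℝ)]
      _ = _ := one_mul _
  have hdet : ∀ A, IsAdjMat N d A → (∀ t, Ps n (2 * n - 100) N d (Eg t) A) →
      ∀ (u : Fin N → ℝ) (θ : ℝ), A.mulVec u = θ • u → ∑ i, u i ^ 2 = 1 →
          ∀ i, |u i| ≤ (N : ℝ) ^ (ε - 1 / 2 : ℝ) := by
    intro A hA hP u θ hu h1 i
    have hθ := eig_le (by omega) hA hu h1
    have hq := hp.qpos
    have hqb := hp.q_big
    have hq1 : 1 ≤ qval N d := by
      have := upow hp.hU 2 (by norm_num) (a := 0) (b := 200) (by norm_num)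
      rw [pow_zero] at this
      linarith
    set lam : ℝ := θ / qval N d with hlam
    have hl : |lam| ≤ N := by
      rw [hlam, abs_div, abs_of_pos hq, div_le_iff₀ hq]
      have := hp.h2'
      have := hp.dpos
      nlinarith
    obtain ⟨hl1, hl2⟩ := abs_le.1 hl
    have hf1 := Int.floor_le ((N : ℝ) * lam + (N : ℝ) ^ 2)
    have hf2 := Int.lt_floor_add_one ((N : ℝ) * lam + (N : ℝ) ^ 2)
    have hf0 : 0 ≤ ⌊(N : ℝ) * lam + (N : ℝ) ^ 2⌋ := by
      rw [Int.floor_nonneg]; nlinarith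
    obtain ⟨k, hk⟩ := Int.eq_ofNat_of_zero_le hf0
    rw [hk] at hf1 hf2
    simp only [Int.cast_natCast] at hf1 hf2
    have hk2 : k < 2 * N ^ 2 + 1 := by
      have : (k : ℝ) ≤ 2 * (N : ℝ) ^ 2 := by nlinarith
      have : k ≤ 2 * N ^ 2 := by exact_mod_cast this
      omega
    have hE : |lam - Eg ⟨k, hk2⟩| ≤ η := by
      refine le_trans ?_ hηN1
      have : lam - Eg ⟨k, hk2⟩ = (N * lam + (N : ℝ) ^ 2 - k) / N := by
        simp only [hEg]; field_simp; ring
      rw [this, abs_div, abs_of_pos hNp, abs_of_nonneg (by linarith)]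
      gcongr
      linarith
    have hfin := deloc hp hηN hA (hP ⟨k, hk2⟩).1 hu h1 hE i
    refine hfin.trans ?_
    rw [Real.rpow_sub hNp, Real.sqrt_eq_rpow]
    gcongr
    rw [hU]
    unfold Un
    rw [← Real.rpow_natCast, ← Real.rpow_mul hNp.le]
    refine Real.rpow_le_rpow_of_exponent_le (by linarith) ?_
    rw [inv_mul_le_iff₀ hn0']
    push_cast
    linarith
  have hall' : (N : ℝ) ^ D' * Fl N d (fun A => ∀ (u : Fin N → ℝ) (θ : ℝ),
          A.mulVec u = θ • u → ∑ i, u i ^ 2 = 1 →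
          ∀ i, |u i| ≤ (N : ℝ) ^ (ε - 1 / 2 : ℝ)) ≤ (Gr N d).card :=
    (mul_le_mul_of_nonneg_left (Fl_mono hdet) (by positivity)).trans hall
  refine le_trans ?_ (PrReg_ge (by omega) (Gr_nonempty (by omega) h2 he) hall')
  have : ((N : ℝ) ^ D')⁻¹ ≤ (N : ℝ) ^ (-D) := by
    rw [← Real.rpow_natCast, ← Real.rpow_neg hNp.le]
    exact Real.rpow_le_rpow_of_exponent_le (by linarith) (by linarith)
  linarith

end
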